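/- Let (R, 𝔪, k) be a regular local ring of dimension 3. Let (m, n, r) be a tuple of positive integers with r = m − 3(n−1) + 2 ≥ 2, n ≥ 3, and m ≥ 2n+1 ≥ 7. Then there exists an ideal J ⊆ R with pd_R(R/J) = 3 such that R/J has Tor-algebra class G(r) and realizes the tuple (m, n, r): the minimal free resolution 0 → F_3 → F_2 → F_1 → R of R/J has rank_R(F_1) = m and rank_R(F_3) = n. -/

import Mathlib

open IsLocalRing

/-- `R/J` has projective dimension 3, Tor-algebra class `G(r)` (normal form
`f̄₁ⁱ f̄₂ⁱ = f̄₃¹` for `1 ≤ i ≤ r`, all other products of basis elements zero)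
and realizes the tuple `(m, n, r)`: its minimal free resolution
`0 → F₃ → F₂ → F₁ → R` has `rank F₁ = m` and `rank F₃ = n`. -/
def HasTorClassGWithRanks (R : Type) [CommRing R] [IsLocalRing R]
    (J : Ideal R) (m n r : ℕ) : Prop :=
  ∃ (n2 : ℕ) (h3 : 0 < n), r ≤ m ∧ r ≤ n2 ∧
  ∃ (d1 : (Fin m → R) →ₗ[R] R) (d2 : (Fin n2 → R) →ₗ[R] (Fin m → R))
    (d3 : (Fin n → R) →ₗ[R] (Fin n2 → R))
    (m11 : (Fin m → R) →ₗ[R] (Fin m → R) →ₗ[R] (Fin n2 → R))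
    (m12 : (Fin m → R) →ₗ[R] (Fin n2 → R) →ₗ[R] (Fin n → R)),
    -- minimal free resolution of `R/J`
    LinearMap.range d1 = J ∧
    LinearMap.ker d1 = LinearMap.range d2 ∧
    LinearMap.ker d2 = LinearMap.range d3 ∧
    LinearMap.ker d3 = ⊥ ∧
    (∀ v, d1 v ∈ maximalIdeal R) ∧
    (∀ v, d2 v ∈ maximalIdeal R • (⊤ : Submodule R (Fin m → R))) ∧
    (∀ v, d3 v ∈ maximalIdeal R • (⊤ : Submodule R (Fin n2 → R))) ∧
    -- DG-algebra axioms
    (∀ a b, d2 (m11 a b) = d1 a • b - d1 b • a) ∧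
    (∀ a, m11 a a = 0) ∧ (∀ a b, m11 a b = - m11 b a) ∧
    (∀ a z, d3 (m12 a z) = d1 a • z - m11 a (d2 z)) ∧
    (∀ a b c, m12 c (m11 a b) = m12 a (m11 b c)) ∧
    -- `G(r)` normal form for the induced products on `F ⊗ k`
    (∀ a b : Fin m, m11 (Pi.single a 1) (Pi.single b 1) ∈
      maximalIdeal R • (⊤ : Submodule R (Fin n2 → R))) ∧
    (∀ (a : Fin m) (b : Fin n2),
      m12 (Pi.single a 1) (Pi.single b 1) -
        (if (a : ℕ) = (b : ℕ) ∧ (a : ℕ) < r then Pi.single (⟨0, h3⟩ : Fin n) 1 else 0) ∈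
      maximalIdeal R • (⊤ : Submodule R (Fin n → R)))

namespace ClassG

/-- Elementary form of regularity of the sequence `x, y, z`. -/
structure Reg3 {R : Type} [CommRing R] (x y z : R) : Prop where
  h1 : ∀ a, x * a = 0 → a = 0
  h2 : ∀ a b, y * b = x * a → ∃ c, b = x * c
  h3 : ∀ a b c, z * c = x * a + y * b → ∃ u v, c = x * u + y * v

theorem reg3_of_weakly {R : Type} [CommRing R] {x y z : R}
    (h : RingTheory.Sequence.IsWeaklyRegular R [x, y, z]) : Reg3 x y z := by
  have H := h.regular_mod_prev
  have H0 : ∀ a : R, x • a ∈ (Ideal.ofList ([] : List R) • ⊤ : Submodule R R) →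
      a ∈ (Ideal.ofList ([] : List R) • ⊤ : Submodule R R) := fun a ha =>
    mem_of_isSMulRegular_quotient_of_smul_mem (H 0 (by simp)) ha
  have H1 : ∀ a : R, y • a ∈ (Ideal.ofList [x] • ⊤ : Submodule R R) →
      a ∈ (Ideal.ofList [x] • ⊤ : Submodule R R) := fun a ha =>
    mem_of_isSMulRegular_quotient_of_smul_mem (H 1 (by simp)) ha
  have H2 : ∀ a : R, z • a ∈ (Ideal.ofList [x, y] • ⊤ : Submodule R R) →
      a ∈ (Ideal.ofList [x, y] • ⊤ : Submodule R R) := fun a ha =>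
    mem_of_isSMulRegular_quotient_of_smul_mem (H 2 (by simp)) ha
  simp only [Ideal.ofList_nil, Ideal.ofList_cons, smul_eq_mul, Ideal.mul_top, bot_le,
    sup_of_le_left] at H0 H1 H2
  refine ⟨fun a ha => ?_, fun a b hab => ?_, fun a b c hc => ?_⟩
  · have := H0 a (by simp [ha])
    simpa using this
  · have := H1 b (by rw [hab]; exact Ideal.mul_mem_right _ _ (Ideal.mem_span_singleton_self x))
    obtain ⟨c, hc⟩ := Ideal.mem_span_singleton.mp this
    exact ⟨c, hc⟩
  · have := H2 c (by
      rw [hc]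
      exact Submodule.add_mem_sup
        (Ideal.mul_mem_right _ _ (Ideal.mem_span_singleton_self x))
        (Ideal.mul_mem_right _ _ (Ideal.mem_span_singleton_self y)))
    obtain ⟨p, hp, q, hq, hpq⟩ := Submodule.mem_sup.mp this
    obtain ⟨u, hu⟩ := Ideal.mem_span_singleton.mp hp
    obtain ⟨v, hv⟩ := Ideal.mem_span_singleton.mp hq
    exact ⟨u, v, by rw [← hpq, hu, hv]⟩

theorem weakly_pow_last {R : Type} [CommRing R] {x y z : R} (n : ℕ)
    (h : RingTheory.Sequence.IsWeaklyRegular R [x, y, z]) :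
    RingTheory.Sequence.IsWeaklyRegular R [x, y, z ^ n] := by
  have h' : RingTheory.Sequence.IsWeaklyRegular R ([x, y] ++ [z]) := h
  rw [RingTheory.Sequence.isWeaklyRegular_append_iff,
    RingTheory.Sequence.isWeaklyRegular_singleton_iff] at h'
  have : RingTheory.Sequence.IsWeaklyRegular R ([x, y] ++ [z ^ n]) := by
    rw [RingTheory.Sequence.isWeaklyRegular_append_iff,
      RingTheory.Sequence.isWeaklyRegular_singleton_iff]
    exact ⟨h'.1, h'.2.pow n⟩
  exact this

theorem weakly_rot {R : Type} [CommRing R] [IsNoetherianRing R] [IsLocalRing R] {x y z : R}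
    (hx : x ∈ maximalIdeal R) (hy : y ∈ maximalIdeal R) (hz : z ∈ maximalIdeal R)
    (h : RingTheory.Sequence.IsWeaklyRegular R [x, y, z]) :
    RingTheory.Sequence.IsWeaklyRegular R [y, z, x] := by
  refine IsLocalRing.isWeaklyRegular_of_perm_of_subset_maximalIdeal h ?_ ?_
  · exact (List.perm_append_comm (l₁ := [x]) (l₂ := [y, z]))
  · intro r hr
    simp only [List.mem_cons, List.not_mem_nil, or_false] at hr
    rcases hr with rfl | rfl | rfl <;> assumption

theorem weakly_swap {R : Type} [CommRing R] [IsNoetherianRing R] [IsLocalRing R] {x y z : R}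
    (hx : x ∈ maximalIdeal R) (hy : y ∈ maximalIdeal R) (hz : z ∈ maximalIdeal R)
    (h : RingTheory.Sequence.IsWeaklyRegular R [x, y, z]) :
    RingTheory.Sequence.IsWeaklyRegular R [y, x, z] := by
  refine IsLocalRing.isWeaklyRegular_of_perm_of_subset_maximalIdeal h ?_ ?_
  · exact List.Perm.swap _ _ _
  · intro r hr
    simp only [List.mem_cons, List.not_mem_nil, or_false] at hr
    rcases hr with rfl | rfl | rfl <;> assumption

theorem weakly_pow {R : Type} [CommRing R] [IsNoetherianRing R] [IsLocalRing R] {x y z : R}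
    (hx : x ∈ maximalIdeal R) (hy : y ∈ maximalIdeal R) (hz : z ∈ maximalIdeal R)
    (h : RingTheory.Sequence.IsWeaklyRegular R [x, y, z]) {n : ℕ} (hn : 0 < n) :
    RingTheory.Sequence.IsWeaklyRegular R [x ^ n, y ^ n, z ^ n] := by
  have hx' := Ideal.pow_mem_of_mem _ hx n hn
  have hy' := Ideal.pow_mem_of_mem _ hy n hn
  have hz' := Ideal.pow_mem_of_mem _ hz n hn
  have a1 := weakly_rot hx hy hz' (weakly_pow_last n h)
  have a2 := weakly_rot hy hz' hx' (weakly_pow_last n a1)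
  have a3 := weakly_rot hz' hx' hy' (weakly_pow_last n a2)
  exact a3

theorem Reg3.koszul {R : Type} [CommRing R] {x y z : R} (h : Reg3 x y z) {a b c : R}
    (e : x * a + y * b + z * c = 0) :
    ∃ α β γ, a = y * γ - z * β ∧ b = z * α - x * γ ∧ c = x * β - y * α := by
  obtain ⟨u, v, huv⟩ := h.h3 (-a) (-b) c (by linear_combination e)
  obtain ⟨w, hw⟩ := h.h2 (-(a + z * u)) (b + z * v) (by
    rw [huv] at e; linear_combination e)
  have h0 : x * (a + z * u + y * w) = 0 := by
    rw [huv] at e; linear_combination e - y * hw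
  have h1 := h.h1 _ h0
  exact ⟨-v, u, -w, by linear_combination h1, by linear_combination hw,
    by linear_combination huv⟩

/-- `x ^ E - z ^ j` is a nonzerodivisor. -/
theorem nzd_sub {R : Type} [CommRing R] [IsNoetherianRing R] [IsLocalRing R] {z u v : R}
    (hz : z ∈ maximalIdeal R) (h1 : ∀ a, z * a = 0 → a = 0)
    (h2 : ∀ a b, u * b = z * a → ∃ c, b = z * c) (hv : ∃ t, v = z * t) {a : R}
    (ha : (u - v) * a = 0) : a = 0 := by
  obtain ⟨t, rfl⟩ := hv
  have key : ∀ n, ∃ b, a = z ^ n * b ∧ (u - z * t) * b = 0 := by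
    intro n
    induction n with
    | zero => exact ⟨a, by simp, ha⟩
    | succ n ih =>
      obtain ⟨b, hb, hb'⟩ := ih
      obtain ⟨c, rfl⟩ := h2 (t * b) b (by linear_combination hb')
      refine ⟨c, by rw [hb]; ring, h1 _ (by linear_combination hb')⟩
  have : a ∈ ⨅ i : ℕ, (maximalIdeal R) ^ i := by
    rw [Submodule.mem_iInf]
    intro i
    obtain ⟨b, hb, -⟩ := key i
    rw [hb]
    exact Ideal.mul_mem_right _ _ (Ideal.pow_mem_pow hz i)
  rw [Ideal.iInf_pow_eq_bot_of_isLocalRing _ (maximalIdeal.isMaximal R).ne_top] at this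
  simpa using this

/-- Lifting along a linear map, with control of the order (Artin-Rees). -/
theorem artin_rees_lift {R : Type} [CommRing R] [IsNoetherianRing R] [IsLocalRing R]
    {P Q : Type} [AddCommGroup P] [Module R P] [AddCommGroup Q] [Module R Q] [Module.Finite R Q]
    (f : P →ₗ[R] Q) (k : ℕ) :
    ∃ K : ℕ, ∀ v ∈ (maximalIdeal R) ^ K • (⊤ : Submodule R Q), v ∈ LinearMap.range f →
      ∃ u ∈ (maximalIdeal R) ^ k • (⊤ : Submodule R P), f u = v := by
  obtain ⟨K, hK⟩ := Ideal.exists_pow_inf_eq_pow_smul (maximalIdeal R) (LinearMap.range f)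
  refine ⟨k + K, fun v hv hr => ?_⟩
  have : v ∈ (maximalIdeal R) ^ k • LinearMap.range f := by
    have h := hK (k + K) (by omega)
    have hv' : v ∈ (maximalIdeal R) ^ (k + K) • (⊤ : Submodule R Q) ⊓ LinearMap.range f := ⟨hv, hr⟩
    rw [h, Nat.add_sub_cancel] at hv'
    exact Submodule.smul_mono le_rfl inf_le_right hv'
  rw [LinearMap.range_eq_map, ← Submodule.map_smul''] at this
  obtain ⟨u, hu, e⟩ := this
  exact ⟨u, hu, e⟩

end ClassG

namespace ClassG

section smulTop
variable {R : Type} [CommRing R] {P Q : Type} [AddCommGroup P] [Module R P]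
  [AddCommGroup Q] [Module R Q]

theorem map_mem_smul_top (f : P →ₗ[R] Q) {I : Ideal R} {v : P}
    (hv : v ∈ I • (⊤ : Submodule R P)) : f v ∈ I • (⊤ : Submodule R Q) := by
  have : f v ∈ (I • (⊤ : Submodule R P)).map f := Submodule.mem_map_of_mem hv
  rw [Submodule.map_smul''] at this
  exact Submodule.smul_mono le_rfl le_top this

theorem mem_smul_top_ring {I : Ideal R} {v : R} : v ∈ I • (⊤ : Submodule R R) ↔ v ∈ I := by
  simp

theorem mem_smul_top_pi {ι : Type} [Fintype ι] [DecidableEq ι] {I : Ideal R} {v : ι → R} :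
    v ∈ I • (⊤ : Submodule R (ι → R)) ↔ ∀ i, v i ∈ I := by
  constructor
  · intro h i
    exact mem_smul_top_ring.mp (map_mem_smul_top (LinearMap.proj i) h)
  · intro h
    rw [pi_eq_sum_univ' v]
    exact Submodule.sum_mem _ fun i _ => Submodule.smul_mem_smul (h i) trivial

theorem mem_smul_top_prod {I : Ideal R} {v : P × Q} :
    v ∈ I • (⊤ : Submodule R (P × Q)) ↔
      v.1 ∈ I • (⊤ : Submodule R P) ∧ v.2 ∈ I • (⊤ : Submodule R Q) := by
  constructor
  · intro h
    exact ⟨map_mem_smul_top (LinearMap.fst R P Q) h, map_mem_smul_top (LinearMap.snd R P Q) h⟩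
  · rintro ⟨h1, h2⟩
    have : v = LinearMap.inl R P Q v.1 + LinearMap.inr R P Q v.2 := by ext <;> simp
    rw [this]
    exact Submodule.add_mem _ (map_mem_smul_top _ h1) (map_mem_smul_top _ h2)

end smulTop

/-- There is a minimal free resolution `0 → G₃ → G₂ → G₁ → G₀` of a module killed by the squares
of the `x i`, with ranks `b, g1, *, g3`. -/
def Res {R : Type} [CommRing R] [IsLocalRing R] (x : Fin 3 → R) (b g1 g3 : ℕ) : Prop :=
  ∃ (g2 : ℕ) (G0 G1 G2 G3 : Type) (_ : AddCommGroup G0) (_ : AddCommGroup G1)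
    (_ : AddCommGroup G2) (_ : AddCommGroup G3)
    (_ : Module R G0) (_ : Module R G1) (_ : Module R G2) (_ : Module R G3)
    (_ : Module.Basis (Fin b) R G0) (_ : Module.Basis (Fin g1) R G1)
    (_ : Module.Basis (Fin g2) R G2) (_ : Module.Basis (Fin g3) R G3)
    (D1 : G1 →ₗ[R] G0) (D2 : G2 →ₗ[R] G1) (D3 : G3 →ₗ[R] G2),
    (∀ v, D1 v = 0 ↔ ∃ w, D2 w = v) ∧ (∀ v, D2 v = 0 ↔ ∃ w, D3 w = v) ∧
    (∀ v, D3 v = 0 → v = 0) ∧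
    (∀ v, D1 v ∈ maximalIdeal R • (⊤ : Submodule R G0)) ∧
    (∀ v, D2 v ∈ maximalIdeal R • (⊤ : Submodule R G1)) ∧
    (∀ v, D3 v ∈ maximalIdeal R • (⊤ : Submodule R G2)) ∧
    (∀ i v, ∃ w, D1 w = x i ^ 2 • v)

theorem Res.add {R : Type} [CommRing R] [IsLocalRing R] {x : Fin 3 → R} {b g1 g3 b' g1' g3' : ℕ}
    (h : Res x b g1 g3) (h' : Res x b' g1' g3') : Res x (b + b') (g1 + g1') (g3 + g3') := by
  obtain ⟨g2, G0, G1, G2, G3, _, _, _, _, _, _, _, _, b0, b1, b2, b3, D1, D2, D3,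
    e1, e2, e3, m1, m2, m3, k⟩ := h
  obtain ⟨g2', G0', G1', G2', G3', _, _, _, _, _, _, _, _, b0', b1', b2', b3', D1', D2', D3',
    e1', e2', e3', m1', m2', m3', k'⟩ := h'
  refine ⟨g2 + g2', G0 × G0', G1 × G1', G2 × G2', G3 × G3', inferInstance, inferInstance,
    inferInstance, inferInstance, inferInstance, inferInstance, inferInstance, inferInstance,
    (b0.prod b0').reindex finSumFinEquiv, (b1.prod b1').reindex finSumFinEquiv,
    (b2.prod b2').reindex finSumFinEquiv, (b3.prod b3').reindex finSumFinEquiv,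
    D1.prodMap D1', D2.prodMap D2', D3.prodMap D3', ?_, ?_, ?_, ?_, ?_, ?_, ?_⟩
  · rintro ⟨v, v'⟩
    simp [e1, e1', Prod.ext_iff]
  · rintro ⟨v, v'⟩
    simp [e2, e2', Prod.ext_iff]
  · rintro ⟨v, v'⟩ hv
    simp only [LinearMap.prodMap_apply, Prod.mk_eq_zero] at hv ⊢
    exact ⟨e3 _ hv.1, e3' _ hv.2⟩
  · intro v; exact mem_smul_top_prod.mpr ⟨m1 _, m1' _⟩
  · intro v; exact mem_smul_top_prod.mpr ⟨m2 _, m2' _⟩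
  · intro v; exact mem_smul_top_prod.mpr ⟨m3 _, m3' _⟩
  · rintro i ⟨v, v'⟩
    obtain ⟨w, hw⟩ := k i v
    obtain ⟨w', hw'⟩ := k' i v'
    exact ⟨(w, w'), by simp [hw, hw']⟩

end ClassG

namespace ClassG

theorem res_koszul {R : Type} [CommRing R] [IsLocalRing R] (x : Fin 3 → R)
    (hm : ∀ i, x i ∈ maximalIdeal R) (h : Reg3 (x 0) (x 1) (x 2)) : Res x 1 3 1 := by
  let D1 : (Fin 3 → R) →ₗ[R] (Fin 1 → R) := Matrix.mulVecLin !![x 0, x 1, x 2]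
  let D2 : (Fin 3 → R) →ₗ[R] (Fin 3 → R) :=
    Matrix.mulVecLin !![0, -x 2, x 1; x 2, 0, -x 0; -x 1, x 0, 0]
  let D3 : (Fin 1 → R) →ₗ[R] (Fin 3 → R) := Matrix.mulVecLin !![x 0; x 1; x 2]
  have h1 : ∀ v, D1 v = ![x 0 * v 0 + x 1 * v 1 + x 2 * v 2] := by
    intro v; ext i; fin_cases i; simp [D1, Matrix.mulVec, dotProduct, Fin.sum_univ_three]
  have h2 : ∀ v, D2 v = ![x 1 * v 2 - x 2 * v 1, x 2 * v 0 - x 0 * v 2, x 0 * v 1 - x 1 * v 0] := by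
    intro v; ext i
    fin_cases i <;> simp [D2, Matrix.mulVec, dotProduct, Fin.sum_univ_three] <;> ring
  have h3 : ∀ v, D3 v = ![x 0 * v 0, x 1 * v 0, x 2 * v 0] := by
    intro v; ext i
    fin_cases i <;> simp [D3, Matrix.mulVec, dotProduct]
  have hx := hm 0
  have hy := hm 1
  have hz := hm 2
  refine ⟨3, Fin 1 → R, Fin 3 → R, Fin 3 → R, Fin 1 → R, inferInstance, inferInstance,
    inferInstance, inferInstance, inferInstance, inferInstance, inferInstance, inferInstance,
    Pi.basisFun R _, Pi.basisFun R _, Pi.basisFun R _, Pi.basisFun R _, D1, D2, D3,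
    fun v => ⟨fun hv => ?_, ?_⟩, fun v => ⟨fun hv => ?_, ?_⟩, ?_, ?_, ?_, ?_, ?_⟩
  · rw [h1] at hv
    have e := congrFun hv 0
    simp only [Matrix.cons_val_zero, Pi.zero_apply] at e
    obtain ⟨α, β, γ, ha, hb, hc⟩ := h.koszul e
    refine ⟨![α, β, γ], ?_⟩
    rw [h2]; ext i
    fin_cases i <;> simp [ha, hb, hc]
  · rintro ⟨w, rfl⟩
    rw [h1, h2]; ext i
    fin_cases i; simp; ring
  · rw [h2] at hv
    have e0 := congrFun hv 0
    have e1 := congrFun hv 1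
    have e2 := congrFun hv 2
    simp at e0 e1 e2
    obtain ⟨c, hc⟩ := h.h2 (v 1) (v 0) (by linear_combination -e2)
    have hc1 : v 1 = x 1 * c := by
      have := h.h1 (v 1 - x 1 * c) (by linear_combination e2 + x 1 * hc)
      linear_combination this
    have hc2 : v 2 = x 2 * c := by
      have := h.h1 (v 2 - x 2 * c) (by linear_combination -e1 + x 2 * hc)
      linear_combination this
    refine ⟨![c], ?_⟩
    rw [h3]; ext i
    fin_cases i <;> simp [hc, hc1, hc2]
  · rintro ⟨w, rfl⟩
    rw [h2, h3]; ext i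
    fin_cases i <;> simp <;> ring
  · intro v hv
    rw [h3] at hv
    have e0 := congrFun hv 0
    simp only [Matrix.cons_val_zero, Pi.zero_apply] at e0
    ext i; fin_cases i; exact h.h1 _ e0
  · intro v; rw [mem_smul_top_pi, h1]; intro i
    fin_cases i
    exact Ideal.add_mem _ (Ideal.add_mem _ (Ideal.mul_mem_right _ _ hx)
      (Ideal.mul_mem_right _ _ hy)) (Ideal.mul_mem_right _ _ hz)
  · intro v; rw [mem_smul_top_pi, h2]; intro i
    fin_cases i
    · exact Ideal.sub_mem _ (Ideal.mul_mem_right _ _ hy) (Ideal.mul_mem_right _ _ hz)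
    · exact Ideal.sub_mem _ (Ideal.mul_mem_right _ _ hz) (Ideal.mul_mem_right _ _ hx)
    · exact Ideal.sub_mem _ (Ideal.mul_mem_right _ _ hx) (Ideal.mul_mem_right _ _ hy)
  · intro v; rw [mem_smul_top_pi, h3]; intro i
    fin_cases i
    · exact Ideal.mul_mem_right _ _ hx
    · exact Ideal.mul_mem_right _ _ hy
    · exact Ideal.mul_mem_right _ _ hz
  · intro i v
    fin_cases i
    · refine ⟨![x 0 * v 0, 0, 0], ?_⟩
      rw [h1]; ext i; fin_cases i; simp; ring
    · refine ⟨![0, x 1 * v 0, 0], ?_⟩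
      rw [h1]; ext i; fin_cases i; simp; ring
    · refine ⟨![0, 0, x 2 * v 0], ?_⟩
      rw [h1]; ext i; fin_cases i; simp; ring

/-- the resolution of `R/((x,y)^2 + (z))`. -/
theorem res_square {R : Type} [CommRing R] [IsLocalRing R] (x : Fin 3 → R)
    (hm : ∀ i, x i ∈ maximalIdeal R) (h : Reg3 (x 0) (x 1) (x 2)) (h' : Reg3 (x 2) (x 1) (x 0))
    (h'' : Reg3 (x 2) (x 0) (x 1)) :
    Res x 1 4 2 := by
  let D1 : (Fin 4 → R) →ₗ[R] (Fin 1 → R) :=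
    Matrix.mulVecLin !![x 0 ^ 2, x 0 * x 1, x 1 ^ 2, x 2]
  let D2 : (Fin 5 → R) →ₗ[R] (Fin 4 → R) :=
    Matrix.mulVecLin !![x 1, 0, -x 2, 0, 0; -x 0, x 1, 0, x 2, 0; 0, -x 0, 0, 0, x 2;
      0, 0, x 0 ^ 2, -(x 0 * x 1), - x 1 ^ 2]
  let D3 : (Fin 2 → R) →ₗ[R] (Fin 5 → R) :=
    Matrix.mulVecLin !![x 2, 0; 0, x 2; x 1, 0; x 0, -x 1; 0, x 0]
  have h1 : ∀ v, D1 v = ![x 0 * (x 0 * v 0 + x 1 * v 1) + x 1 * (x 1 * v 2) + x 2 * v 3] := by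
    intro v; ext i
    fin_cases i
    simp [D1, Matrix.mulVec, dotProduct, Fin.sum_univ_succ]; ring
  have h2 : ∀ v, D2 v = ![x 1 * v 0 - x 2 * v 2, x 1 * v 1 + x 2 * v 3 - x 0 * v 0,
      x 2 * v 4 - x 0 * v 1, x 0 * (x 0 * v 2 - x 1 * v 3) - x 1 * (x 1 * v 4)] := by
    intro v; ext i
    fin_cases i <;> simp [D2, Matrix.mulVec, dotProduct, Fin.sum_univ_succ] <;> ring
  have h3 : ∀ v, D3 v = ![x 2 * v 0, x 2 * v 1, x 1 * v 0, x 0 * v 0 - x 1 * v 1, x 0 * v 1] := by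
    intro v; ext i
    fin_cases i <;> simp [D3, Matrix.mulVec, dotProduct] <;> ring
  have hx := hm 0
  have hy := hm 1
  have hz := hm 2
  refine ⟨5, Fin 1 → R, Fin 4 → R, Fin 5 → R, Fin 2 → R, inferInstance, inferInstance,
    inferInstance, inferInstance, inferInstance, inferInstance, inferInstance, inferInstance,
    Pi.basisFun R _, Pi.basisFun R _, Pi.basisFun R _, Pi.basisFun R _, D1, D2, D3,
    fun v => ⟨fun hv => ?_, ?_⟩, fun v => ⟨fun hv => ?_, ?_⟩, ?_, ?_, ?_, ?_, ?_⟩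
  · rw [h1] at hv
    have e := congrFun hv 0
    simp only [Matrix.cons_val_zero, Pi.zero_apply] at e
    obtain ⟨α0, β0, γ0, ha, hb, hc⟩ := h.koszul e
    obtain ⟨α, β, γ, ha1, hb1, hc1⟩ := h.koszul (a := v 0) (b := v 1 - γ0) (c := β0)
      (by linear_combination ha)
    obtain ⟨α', β', γ', ha2, hb2, hc2⟩ := h.koszul (a := γ0) (b := v 2) (c := -α0)
      (by linear_combination hb)
    refine ⟨![γ, γ', β, α - β', α'], ?_⟩
    rw [h2]; ext i
    fin_cases i
    · simp; linear_combination -ha1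
    · simp; linear_combination -hb1 - ha2
    · simp; linear_combination -hb2
    · simp; linear_combination -hc - x 0 * hc1 - x 1 * hc2
  · rintro ⟨w, rfl⟩
    rw [h1, h2]; ext i
    fin_cases i; simp; ring
  · rw [h2] at hv
    have e0 := congrFun hv 0
    have e1 := congrFun hv 1
    have e2 := congrFun hv 2
    simp at e0 e1 e2
    obtain ⟨t, ht⟩ := h'.h2 (v 2) (v 0) (by linear_combination e0)
    obtain ⟨t', ht'⟩ := h''.h2 (v 4) (v 1) (by linear_combination -e2)
    have hc2 : v 2 = x 1 * t := by
      have := h'.h1 (v 2 - x 1 * t) (by linear_combination -e0 + x 1 * ht)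
      linear_combination this
    have hc4 : v 4 = x 0 * t' := by
      have := h'.h1 (v 4 - x 0 * t') (by linear_combination e2 + x 0 * ht')
      linear_combination this
    have hc3 : v 3 = x 0 * t - x 1 * t' := by
      have := h'.h1 (v 3 - (x 0 * t - x 1 * t'))
        (by linear_combination e1 - x 1 * ht' + x 0 * ht)
      linear_combination this
    refine ⟨![t, t'], ?_⟩
    rw [h3]; ext i
    fin_cases i <;> simp [ht, ht', hc2, hc3, hc4]
  · rintro ⟨w, rfl⟩
    rw [h2, h3]; ext i
    fin_cases i <;> simp <;> ring
  · intro v hv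
    rw [h3] at hv
    have e0 := congrFun hv 0
    have e1 := congrFun hv 1
    simp at e0 e1
    ext i; fin_cases i
    · exact h'.h1 _ e0
    · exact h'.h1 _ e1
  · intro v; rw [mem_smul_top_pi, h1]; intro i
    fin_cases i
    exact Ideal.add_mem _ (Ideal.add_mem _ (Ideal.mul_mem_right _ _ hx)
      (Ideal.mul_mem_right _ _ hy)) (Ideal.mul_mem_right _ _ hz)
  · intro v; rw [mem_smul_top_pi, h2]; intro i
    fin_cases i
    · exact Ideal.sub_mem _ (Ideal.mul_mem_right _ _ hy) (Ideal.mul_mem_right _ _ hz)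
    · exact Ideal.sub_mem _ (Ideal.add_mem _ (Ideal.mul_mem_right _ _ hy)
        (Ideal.mul_mem_right _ _ hz)) (Ideal.mul_mem_right _ _ hx)
    · exact Ideal.sub_mem _ (Ideal.mul_mem_right _ _ hz) (Ideal.mul_mem_right _ _ hx)
    · exact Ideal.sub_mem _ (Ideal.mul_mem_right _ _ hx) (Ideal.mul_mem_right _ _ hy)
  · intro v; rw [mem_smul_top_pi, h3]; intro i
    fin_cases i
    · exact Ideal.mul_mem_right _ _ hz
    · exact Ideal.mul_mem_right _ _ hz
    · exact Ideal.mul_mem_right _ _ hy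
    · exact Ideal.sub_mem _ (Ideal.mul_mem_right _ _ hx) (Ideal.mul_mem_right _ _ hy)
    · exact Ideal.mul_mem_right _ _ hx
  · intro i v
    fin_cases i
    · refine ⟨![v 0, 0, 0, 0], ?_⟩
      rw [h1]; ext i; fin_cases i; simp; ring
    · refine ⟨![0, 0, v 0, 0], ?_⟩
      rw [h1]; ext i; fin_cases i; simp; ring
    · refine ⟨![0, 0, 0, x 2 * v 0], ?_⟩
      rw [h1]; ext i; fin_cases i; simp; ring

/-- the Buchsbaum-Rim resolution of the cokernel of `[x y z 0; 0 x y z]`. -/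
theorem res_br {R : Type} [CommRing R] [IsLocalRing R] (x : Fin 3 → R)
    (hm : ∀ i, x i ∈ maximalIdeal R) (h : Reg3 (x 0) (x 1) (x 2)) (h' : Reg3 (x 2) (x 1) (x 0))
    (h'' : Reg3 (x 0) (x 2) (x 1)) :
    Res x 2 4 2 := by
  let D1 : (Fin 4 → R) →ₗ[R] (Fin 2 → R) :=
    Matrix.mulVecLin !![x 0, x 1, x 2, 0; 0, x 0, x 1, x 2]
  let D2 : (Fin 4 → R) →ₗ[R] (Fin 4 → R) :=
    Matrix.mulVecLin !![0, x 2 ^ 2, x 1 ^ 2 - x 0 * x 2, - (x 1 * x 2);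
      - x 2 ^ 2, 0, - (x 0 * x 1), x 0 * x 2;
      x 1 * x 2, - (x 0 * x 2), x 0 ^ 2, 0;
      x 0 * x 2 - x 1 ^ 2, x 0 * x 1, 0, - x 0 ^ 2]
  let D3 : (Fin 2 → R) →ₗ[R] (Fin 4 → R) :=
    Matrix.mulVecLin !![x 0, 0; x 1, x 0; 0, x 2; x 2, x 1]
  have h1 : ∀ v, D1 v = ![x 0 * v 0 + x 1 * v 1 + x 2 * v 2, x 0 * v 1 + x 1 * v 2 + x 2 * v 3] := by
    intro v; ext i
    fin_cases i <;>
    simp [D1, Matrix.mulVec, dotProduct, Fin.sum_univ_succ] <;> ring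
  have h2 : ∀ v, D2 v = ![x 2 * (x 2 * v 1 - x 0 * v 2) + x 1 * (x 1 * v 2 - x 2 * v 3),
      x 0 * (x 2 * v 3 - x 1 * v 2) - x 2 * (x 2 * v 0),
      x 0 * (x 0 * v 2 - x 2 * v 1) + x 1 * (x 2 * v 0),
      x 0 * (x 2 * v 0 + x 1 * v 1 - x 0 * v 3) - x 1 * (x 1 * v 0)] := by
    intro v; ext i
    fin_cases i <;> simp [D2, Matrix.mulVec, dotProduct, Fin.sum_univ_succ] <;> ring
  have h3 : ∀ v, D3 v = ![x 0 * v 0, x 1 * v 0 + x 0 * v 1, x 2 * v 1, x 2 * v 0 + x 1 * v 1] := by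
    intro v; ext i
    fin_cases i <;> simp [D3, Matrix.mulVec, dotProduct]
  have hx := hm 0
  have hy := hm 1
  have hz := hm 2
  refine ⟨4, Fin 2 → R, Fin 4 → R, Fin 4 → R, Fin 2 → R, inferInstance, inferInstance,
    inferInstance, inferInstance, inferInstance, inferInstance, inferInstance, inferInstance,
    Pi.basisFun R _, Pi.basisFun R _, Pi.basisFun R _, Pi.basisFun R _, D1, D2, D3,
    fun v => ⟨fun hv => ?_, ?_⟩, fun v => ⟨fun hv => ?_, ?_⟩, ?_, ?_, ?_, ?_, ?_⟩
  · rw [h1] at hv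
    have e0 := congrFun hv 0
    have e1 := congrFun hv 1
    simp at e0 e1
    obtain ⟨α, β, γ, hb, hc, hd⟩ := h.koszul e1
    obtain ⟨α2, β2, γ2, ha1, ha2, ha3⟩ := h.koszul (a := v 0 - x 2 * γ)
      (b := x 1 * γ - x 2 * β) (c := x 2 * α)
      (by linear_combination e0 - x 1 * hb - x 2 * hc)
    obtain ⟨r1, r2, r3, hr1, hr2, hr3⟩ := h.koszul (a := β2) (b := -α2) (c := -α)
      (by linear_combination -ha3)
    obtain ⟨s1, s2, s3, hs1, hs2, hs3⟩ := h.koszul (a := γ2) (b := γ) (c := -(β + α2))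
      (by linear_combination ha2)
    have E1 : α = x 1 * r1 - x 0 * r2 := by linear_combination -hr3
    have E2 : α2 = x 0 * r3 - x 2 * r1 := by linear_combination -hr2
    have E3 : β = -α2 - x 0 * s2 + x 1 * s1 := by linear_combination -hs3
    have E4 : v 0 = x 2 * γ + x 1 * γ2 - x 2 * β2 := by linear_combination ha1
    refine ⟨![r1, s1 + r2, s3, r3 + s2], ?_⟩
    rw [h2]; ext i
    fin_cases i
    · simp; rw [E4, hs2, hs1, hr1]; ring
    · simp; rw [hb, hs2, E3, E2]; ring
    · simp; rw [hc, E1, hs2]; ring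
    · simp; rw [hd, E3, E2, E1]; ring
  · rintro ⟨w, rfl⟩
    rw [h1, h2]; ext i
    fin_cases i <;> simp <;> ring
  · rw [h2] at hv
    have e0 := congrFun hv 0
    have e1 := congrFun hv 1
    have e2 := congrFun hv 2
    simp at e0 e1 e2
    obtain ⟨t0, ht0⟩ := h''.h2 (x 2 * v 3 - x 1 * v 2) (x 2 * v 0) (by linear_combination -e1)
    obtain ⟨t, ht⟩ := h''.h2 t0 (v 0) ht0
    have a1 : x 2 * v 3 - x 1 * v 2 = x 2 ^ 2 * t := by
      have := h''.h1 (x 2 * v 3 - x 1 * v 2 - x 2 ^ 2 * t)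
        (by linear_combination e1 + x 2 ^ 2 * ht)
      linear_combination this
    obtain ⟨t', ht'⟩ := h'.h2 (v 3 - x 2 * t) (v 2) (by linear_combination -a1)
    have hc3 : v 3 = x 2 * t + x 1 * t' := by
      have := h'.h1 (v 3 - (x 2 * t + x 1 * t')) (by linear_combination a1 + x 1 * ht')
      linear_combination this
    have hc1 : v 1 = x 1 * t + x 0 * t' := by
      have := h''.h1 _ (h'.h1 (x 0 * (v 1 - (x 1 * t + x 0 * t')))
        (by linear_combination -e2 + x 0 ^ 2 * ht' + x 1 * x 2 * ht))
      linear_combination this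
    refine ⟨![t, t'], ?_⟩
    rw [h3]; ext i
    fin_cases i <;> simp [ht, ht', hc1, hc3]
  · rintro ⟨w, rfl⟩
    rw [h2, h3]; ext i
    fin_cases i <;> simp <;> ring
  · intro v hv
    rw [h3] at hv
    have e0 := congrFun hv 0
    have e1 := congrFun hv 2
    simp at e0 e1
    ext i; fin_cases i
    · exact h.h1 _ e0
    · exact h'.h1 _ e1
  · intro v; rw [mem_smul_top_pi, h1]; intro i
    fin_cases i <;>
    exact Ideal.add_mem _ (Ideal.add_mem _ (Ideal.mul_mem_right _ _ hx)
      (Ideal.mul_mem_right _ _ hy)) (Ideal.mul_mem_right _ _ hz)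
  · intro v; rw [mem_smul_top_pi, h2]; intro i
    fin_cases i
    · exact Ideal.add_mem _ (Ideal.mul_mem_right _ _ hz) (Ideal.mul_mem_right _ _ hy)
    · exact Ideal.sub_mem _ (Ideal.mul_mem_right _ _ hx) (Ideal.mul_mem_right _ _ hz)
    · exact Ideal.add_mem _ (Ideal.mul_mem_right _ _ hx) (Ideal.mul_mem_right _ _ hy)
    · exact Ideal.sub_mem _ (Ideal.mul_mem_right _ _ hx) (Ideal.mul_mem_right _ _ hy)
  · intro v; rw [mem_smul_top_pi, h3]; intro i
    fin_cases i
    · exact Ideal.mul_mem_right _ _ hx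
    · exact Ideal.add_mem _ (Ideal.mul_mem_right _ _ hy) (Ideal.mul_mem_right _ _ hx)
    · exact Ideal.mul_mem_right _ _ hz
    · exact Ideal.add_mem _ (Ideal.mul_mem_right _ _ hz) (Ideal.mul_mem_right _ _ hy)
  · intro i v
    fin_cases i
    · refine ⟨![x 0 * v 0 - x 1 * v 1, x 0 * v 1, 0, 0], ?_⟩
      rw [h1]; ext i; fin_cases i <;> simp <;> ring
    · refine ⟨![x 2 * v 0, x 1 * v 0 - x 2 * v 1, x 1 * v 1 - x 0 * v 0, x 0 * v 1], ?_⟩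
      rw [h1]; ext i; fin_cases i <;> simp <;> ring
    · refine ⟨![0, 0, x 2 * v 0, x 2 * v 1 - x 1 * v 0], ?_⟩
      rw [h1]; ext i; fin_cases i <;> simp <;> ring

/-- All needed ranks. -/
theorem res_exists {R : Type} [CommRing R] [IsLocalRing R] (x : Fin 3 → R)
    (hm : ∀ i, x i ∈ maximalIdeal R) (h : Reg3 (x 0) (x 1) (x 2)) (h1 : Reg3 (x 2) (x 1) (x 0))
    (h2 : Reg3 (x 2) (x 0) (x 1)) (h3 : Reg3 (x 0) (x 2) (x 1)) (s : ℕ) :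
    Res x (s + 1) (3 * s + 4) (s + 2) ∧ Res x (s + 2) (3 * s + 4) (s + 2) := by
  induction s with
  | zero => exact ⟨res_square x hm h h1 h2, res_br x hm h h1 h3⟩
  | succ s ih =>
    have k := res_koszul x hm h
    have a := ih.1.add k
    have b := ih.2.add k
    have e1 : 3 * (s + 1) + 4 = 3 * s + 4 + 3 := by ring
    have e2 : s + 1 + 2 = s + 2 + 1 := by ring
    rw [e1, e2]
    exact ⟨a, b⟩

end ClassG

namespace ClassG

/-- Exactness from homotopies. -/
theorem gor_exact {R : Type} [CommRing R] {ι : Type} [Fintype ι]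
    (d1 : (ι → R) →ₗ[R] R) (d2 : (ι → R) →ₗ[R] (ι → R)) (G : ι → R)
    (m11 : (ι → R) →ₗ[R] (ι → R) →ₗ[R] (ι → R))
    (I1 : ∀ a b, d2 (m11 a b) = d1 a • b - d1 b • a)
    (I2 : ∀ a f, (a ⬝ᵥ f) • G = d1 a • f - m11 a (d2 f))
    (hG : ∀ t : R, t • G = 0 → t = 0) (hG0 : d2 G = 0) {X Y Z : R} (hreg : Reg3 X Y Z)
    (hX : ∃ a, d1 a = X) (hY : ∃ a, d1 a = Y) (hZ : ∃ a, d1 a = Z) :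
    (∀ v, d1 v = 0 → ∃ w, d2 w = v) ∧ (∀ v, d2 v = 0 → ∃ t : R, t • G = v) := by
  obtain ⟨a, ha⟩ := hX
  obtain ⟨b, hb⟩ := hY
  obtain ⟨c, hc⟩ := hZ
  have H2 : ∀ v, d2 v = 0 → ∃ t : R, t • G = v := by
    intro v hv
    have ea := I2 a v
    have eb := I2 b v
    rw [hv, map_zero, sub_zero, ha] at ea
    rw [hv, map_zero, sub_zero, hb] at eb
    have : (Y * (a ⬝ᵥ v) - X * (b ⬝ᵥ v)) • G = 0 := by
      rw [sub_smul, mul_smul, mul_smul, ea, eb, smul_comm, sub_self]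
    obtain ⟨t, ht⟩ := hreg.h2 (b ⬝ᵥ v) (a ⬝ᵥ v) (sub_eq_zero.mp (hG _ this))
    refine ⟨t, ?_⟩
    rw [ht, mul_smul] at ea
    ext i
    have := congrFun ea i
    simp only [Pi.smul_apply, smul_eq_mul] at this ⊢
    exact sub_eq_zero.mp (hreg.h1 _ (by linear_combination this))
  refine ⟨?_, H2⟩
  intro v hv
  have lift : ∀ e, ∃ w, d2 w = d1 e • v := fun e => ⟨m11 e v, by rw [I1, hv, zero_smul, sub_zero]⟩
  obtain ⟨w0, h0⟩ := lift a
  obtain ⟨w1, h1⟩ := lift b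
  obtain ⟨w2, h2⟩ := lift c
  rw [ha] at h0
  rw [hb] at h1
  rw [hc] at h2
  obtain ⟨l01, e01⟩ := H2 (X • w1 - Y • w0) (by
    rw [map_sub, map_smul, map_smul, h0, h1, smul_comm, sub_self])
  obtain ⟨l02, e02⟩ := H2 (X • w2 - Z • w0) (by
    rw [map_sub, map_smul, map_smul, h0, h2, smul_comm, sub_self])
  obtain ⟨l12, e12⟩ := H2 (Y • w2 - Z • w1) (by
    rw [map_sub, map_smul, map_smul, h1, h2, smul_comm, sub_self])
  have hk : X * l12 + Y * (-l02) + Z * l01 = 0 := by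
    apply hG
    rw [add_smul, add_smul, mul_smul, mul_smul, mul_smul, neg_smul, e01, e02, e12]
    module
  obtain ⟨α, β, γ, -, -, e⟩ := hreg.koszul hk
  have hdiv : ∀ i, ∃ t, (w0 - α • G) i = X * t := by
    intro i
    apply hreg.h2 ((w1 - β • G) i)
    have := congrFun e01 i
    simp only [Pi.smul_apply, Pi.sub_apply, smul_eq_mul] at this ⊢
    rw [e] at this
    linear_combination this
  choose w' hw' using hdiv
  refine ⟨w', ?_⟩
  have hw : X • w' = w0 - α • G := by
    ext i; rw [hw']; rfl
  have : X • d2 w' = X • v := by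
    rw [← map_smul, hw, map_sub, map_smul, hG0, h0, smul_zero, sub_zero]
  ext i
  have := congrFun this i
  simp only [Pi.smul_apply, smul_eq_mul] at this ⊢
  exact sub_eq_zero.mp (hreg.h1 _ (by linear_combination this))

end ClassG

namespace ClassG

/-- The cyclic tournament: the cyclic distance from `i` to `j` is odd. -/
def T (i j : ℕ) : Prop := (i < j ∧ (j - i) % 2 = 1) ∨ (j < i ∧ (i - j) % 2 = 0)

instance (i j : ℕ) : Decidable (T i j) := by unfold T; infer_instance

/-- Cyclic triples of the tournament. -/
def C (i j l : ℕ) : Prop := T i j ∧ T j l ∧ T l i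

instance (i j l : ℕ) : Decidable (C i j l) := by unfold C; infer_instance

def sg (i j l : ℕ) : ℤ := if C i j l then 1 else if C j i l then -1 else 0

theorem C_rot {i j l : ℕ} : C i j l ↔ C j l i := by unfold C; tauto

theorem sg_rot (i j l : ℕ) : sg i j l = sg j l i := by
  have h1 : C i j l ↔ C j l i := C_rot
  have h2 : C j i l ↔ C l j i := C_rot.trans C_rot
  unfold sg
  simp only [h1, h2]

theorem T_asymm {i j : ℕ} (h : T i j) : ¬ T j i := by unfold T at *; omega

theorem sg_swap (i j l : ℕ) : sg i j l = - sg j i l := by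
  unfold sg
  have : C i j l → ¬ C j i l := fun h h' => T_asymm h.1 h'.1
  split_ifs <;> first | rfl | tauto

theorem rec_f1 {p i j k a b : ℕ} (hi : i < 2 * p + 1) (hj : j < 2 * p + 1)
    (hk : k < 2 * p + 1) (ha : (a = k + 1 ∧ a < 2 * p + 1) ∨ (k = 2 * p ∧ a = 0))
    (hb : b + 1 = k ∨ (k = 0 ∧ b = 2 * p)) (hp : 1 ≤ p) :
    T j a ↔ (j = k ∨ (T j b ∧ j ≠ a)) := by
  unfold T at *; omega

theorem rec_f2 {p i j k a b : ℕ} (hi : i < 2 * p + 1) (hj : j < 2 * p + 1)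
    (hk : k < 2 * p + 1) (ha : (a = k + 1 ∧ a < 2 * p + 1) ∨ (k = 2 * p ∧ a = 0))
    (hb : b + 1 = k ∨ (k = 0 ∧ b = 2 * p)) (hp : 1 ≤ p) :
    T a i ↔ (i = b ∨ (T b i ∧ i ≠ k)) := by
  unfold T at *; omega

theorem rec_f6 {p i j k a b : ℕ} (hi : i < 2 * p + 1) (hj : j < 2 * p + 1)
    (hk : k < 2 * p + 1) (ha : (a = k + 1 ∧ a < 2 * p + 1) ∨ (k = 2 * p ∧ a = 0))
    (hb : b + 1 = k ∨ (k = 0 ∧ b = 2 * p)) (hp : 1 ≤ p) (hij : T i j) :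
    j = k → (i = b ∨ (T b i ∧ i ≠ k)) := by
  unfold T at *; omega

theorem rec_f7 {p i j k a b : ℕ} (hi : i < 2 * p + 1) (hj : j < 2 * p + 1)
    (hk : k < 2 * p + 1) (ha : (a = k + 1 ∧ a < 2 * p + 1) ∨ (k = 2 * p ∧ a = 0))
    (hb : b + 1 = k ∨ (k = 0 ∧ b = 2 * p)) (hp : 1 ≤ p) (hij : T i j) :
    i = k → j ≠ k → T j b := by
  unfold T at *; omega

theorem rec_f8 {p i j k a b : ℕ} (hi : i < 2 * p + 1) (hj : j < 2 * p + 1)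
    (hk : k < 2 * p + 1) (ha : (a = k + 1 ∧ a < 2 * p + 1) ∨ (k = 2 * p ∧ a = 0))
    (hb : b + 1 = k ∨ (k = 0 ∧ b = 2 * p)) (hp : 1 ≤ p) (hij : T i j) :
    j = a → i ≠ k → ¬ T b i := by
  unfold T at *; omega

theorem sg_rec_aux {p i j k a b : ℕ} (hi : i < 2 * p + 1) (hj : j < 2 * p + 1)
    (hk : k < 2 * p + 1) (ha : (a = k + 1 ∧ a < 2 * p + 1) ∨ (k = 2 * p ∧ a = 0))
    (hb : b + 1 = k ∨ (k = 0 ∧ b = 2 * p)) (hp : 1 ≤ p) (hij : T i j) :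
    (if T j a ∧ T a i then (1 : ℤ) else 0) - (if T j b ∧ T b i then 1 else 0) =
      (if j = k then 1 else 0) - (if i = k then 1 else 0) := by
  have f11 : k ≠ b := by clear hij; omega
  have f10 : j = k → i = k → False := by
    rintro rfl rfl; exact T_asymm hij hij
  have f1 : T j a ↔ (j = k ∨ (T j b ∧ j ≠ a)) := rec_f1 hi hj hk ha hb hp
  have f2 : T a i ↔ (i = b ∨ (T b i ∧ i ≠ k)) := rec_f2 hi hj hk ha hb hp
  have f3 : j = k → ¬ T j b := by clear hij f1 f2; unfold T; omega
  have f4 : i = k → T b i := by clear hij f1 f2 f3; unfold T; omega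
  have f5 : i = b → ¬ T b i := by rintro rfl h; exact T_asymm h h
  have f6 : j = k → (i = b ∨ (T b i ∧ i ≠ k)) := rec_f6 hi hj hk ha hb hp hij
  have f7 : i = k → j ≠ k → T j b := rec_f7 hi hj hk ha hb hp hij
  have f8 : j = a → i ≠ k → ¬ T b i := rec_f8 hi hj hk ha hb hp hij
  have f9 : i = b → ¬ T j b := by rintro rfl; exact T_asymm hij
  rw [if_congr (and_congr f1 f2) rfl rfl]
  by_cases h1 : j = k
  · have : ¬ i = k := f10 h1
    simp [h1, this, show ¬ T k b from h1 ▸ f3 h1]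
    intro h; exact ((f6 h1).resolve_left h).1
  · by_cases h2 : i = k
    · have t1 := f4 h2
      have t2 := f7 h2 h1
      rw [h2] at t1
      simp [h1, h2, t1, t2, f11]
    · simp only [h1, h2, false_or, ne_eq, not_false_eq_true, and_true, if_false, sub_self]
      by_cases h3 : i = b
      · simp [h3, f9 h3]
      · by_cases h4 : j = a
        · simp [h3, h4, f8 h4 h2]
        · simp [h3, h4]

theorem sg_rec {p i j k a b : ℕ} (hi : i < 2 * p + 1) (hj : j < 2 * p + 1) (hk : k < 2 * p + 1)
    (ha : (a = k + 1 ∧ a < 2 * p + 1) ∨ (k = 2 * p ∧ a = 0))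
    (hb : b + 1 = k ∨ (k = 0 ∧ b = 2 * p)) (hp : 1 ≤ p) :
    sg i j a - sg i j b = (if j = k then 1 else 0) - (if i = k then 1 else 0) := by
  have pos : ∀ {i j : ℕ}, T i j → ∀ l, sg i j l = if T j l ∧ T l i then 1 else 0 := by
    intro i j hij l; unfold sg C; simp [hij, T_asymm hij]
  by_cases hij : T i j
  · rw [pos hij, pos hij]
    exact sg_rec_aux hi hj hk ha hb hp hij
  · by_cases hji : T j i
    · rw [sg_swap i j a, sg_swap i j b, pos hji, pos hji]
      have := sg_rec_aux hj hi hk ha hb hp hji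
      linarith
    · have : i = j := by unfold T at *; omega
      subst this
      have e : ∀ l, sg i i l = 0 := by
        intro l; unfold sg C; simp [hij]
      rw [e, e]; simp

theorem C_cover {p i j l e : ℕ} (hi : i < 2 * p + 1) (hj : j < 2 * p + 1) (hl : l < 2 * p + 1)
    (he : e < 2 * p + 1) (h : C i j l) : T i e ∨ T j e ∨ T l e := by
  unfold C T at *; omega

theorem C_twice {p i j l : ℕ} (hi : i < 2 * p + 1) (hj : j < 2 * p + 1) (hl : l < 2 * p + 1)
    (hp : 2 ≤ p) (h : C i j l) :
    ∃ e, e < 2 * p + 1 ∧ ((T i e ∧ T j e) ∨ (T j e ∧ T l e) ∨ (T l e ∧ T i e)) := by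
  have key : ∀ {i j : ℕ}, i < 2 * p + 1 → j < 2 * p + 1 → T i j → 
      (∃ e, e < 2 * p + 1 ∧ T i e ∧ T j e) ∨ (j = i + 1 ∨ (i = 2 * p ∧ j = 0)) := by
    intro i j hi hj h
    by_cases hc : j = i + 1 ∨ (i = 2 * p ∧ j = 0)
    · exact Or.inr hc
    left
    by_cases hi' : i = 2 * p
    · refine ⟨0, by omega, ?_⟩
      unfold T at *; omega
    · refine ⟨i + 1, by omega, ?_⟩
      unfold T at *; omega
  rcases key hi hj h.1 with ⟨e, he, h1⟩ | h1
  · exact ⟨e, he, Or.inl h1⟩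
  rcases key hj hl h.2.1 with ⟨e, he, h2⟩ | h2
  · exact ⟨e, he, Or.inr (Or.inl h2)⟩
  rcases key hl hi h.2.2 with ⟨e, he, h3⟩ | h3
  · exact ⟨e, he, Or.inr (Or.inr h3)⟩
  omega

theorem T_partition {p k a e : ℕ} (hk : k < 2 * p + 1) (he : e < 2 * p + 1)
    (ha : (a = k + 1 ∧ a < 2 * p + 1) ∨ (k = 2 * p ∧ a = 0)) (hp : 1 ≤ p) :
    (if T k e then 1 else 0) + (if e = k then 1 else 0) + (if T a e then 1 else 0) = 1 := by
  have A : T k e → e ≠ k ∧ ¬ T a e := by unfold T; omega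
  have B : e = k → ¬ T a e := by unfold T; omega
  have D : e ≠ k → ¬ T k e → T a e := by unfold T; omega
  by_cases h1 : T k e
  · simp [h1, A h1]
  · by_cases h2 : e = k
    · rw [if_neg h1, if_neg (B h2), if_pos h2]
    · simp [h1, h2, D h2 h1]

end ClassG

namespace ClassG

section gor
variable {R : Type} [CommRing R] {p : ℕ} (u : Fin (2 * p + 1) → R)

/-- Cyclic successor. -/
def nx (p : ℕ) : Fin (2 * p + 1) ≃ Fin (2 * p + 1) := Equiv.addRight 1

theorem nx_val (k : Fin (2 * p + 1)) :
    ((nx p k : ℕ) = k + 1 ∧ (nx p k : ℕ) < 2 * p + 1) ∨ ((k : ℕ) = 2 * p ∧ (nx p k : ℕ) = 0) := by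
  have h1 : nx p k = k + 1 := rfl
  have h2 := k.isLt
  rw [h1]
  rcases Nat.lt_or_ge (k : ℕ) (2 * p) with h | h
  · left
    rw [Fin.val_add_one_of_lt (by rw [Fin.lt_def]; simpa using h)]
    omega
  · right
    have : k = Fin.last (2 * p) := by ext; simp; omega
    subst this
    simp

theorem pv_val (k : Fin (2 * p + 1)) :
    (((nx p).symm k : ℕ) + 1 = k) ∨ ((k : ℕ) = 0 ∧ ((nx p).symm k : ℕ) = 2 * p) := by
  have := nx_val ((nx p).symm k)
  rw [Equiv.apply_symm_apply] at this
  omega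

def ct (i e : ℕ) : ℕ := if T i e then 1 else 0

def hh (i : Fin (2 * p + 1)) : R := ∏ e, u e ^ ct i e

def w0 (i j l : Fin (2 * p + 1)) : R := ∏ e, u e ^ (ct i e + ct j e + ct l e - 1)

def ww (i j l : Fin (2 * p + 1)) : R := sg i j l * w0 u i j l

theorem ww_rot (i j l : Fin (2 * p + 1)) : ww u i j l = ww u j l i := by
  unfold ww w0
  rw [sg_rot]
  congr 1
  refine Finset.prod_congr rfl fun e _ => ?_
  congr 1; omega

theorem ww_swap (i j l : Fin (2 * p + 1)) : ww u i j l = - ww u j i l := by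
  unfold ww w0
  rw [sg_swap]
  push_cast
  rw [neg_mul]
  congr 2
  refine Finset.prod_congr rfl fun e _ => ?_
  congr 1; omega

theorem ww_self (i l : Fin (2 * p + 1)) : ww u i i l = 0 := by
  unfold ww sg
  have : ¬ C i i l := fun h => T_asymm h.1 h.1
  simp [this]

theorem hh_mul (hp : 1 ≤ p) (k : Fin (2 * p + 1)) :
    hh u k * u k * hh u (nx p k) = ∏ e, u e := by
  have : u k = ∏ e, u e ^ (if (e : ℕ) = k then 1 else 0) := by
    rw [Finset.prod_eq_single k]
    · simp
    · intro b _ hb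
      rw [if_neg (by intro h; exact hb (Fin.ext h)), pow_zero]
    · simp
  rw [this]
  unfold hh
  rw [← Finset.prod_mul_distrib, ← Finset.prod_mul_distrib]
  refine Finset.prod_congr rfl fun e _ => ?_
  rw [← pow_add, ← pow_add]
  unfold ct
  rw [T_partition k.isLt e.isLt (nx_val k) hp, pow_one]

theorem ww_mul (i j l : Fin (2 * p + 1)) :
    (∏ e, u e) * ww u i j l = sg i j l * (hh u i * hh u j * hh u l) := by
  have key : sg i j l ≠ 0 → (∏ e, u e) * w0 u i j l = hh u i * hh u j * hh u l := by
    intro h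
    have hC : C i j l ∨ C j i l := by
      unfold sg at h
      by_contra hc
      push Not at hc
      simp [hc] at h
    unfold w0 hh
    rw [← Finset.prod_mul_distrib, ← Finset.prod_mul_distrib, ← Finset.prod_mul_distrib]
    refine Finset.prod_congr rfl fun e _ => ?_
    rw [← pow_add, ← pow_add, ← pow_succ']
    congr 1
    have hT : T i e ∨ T j e ∨ T l e := by
      rcases hC with h | h
      · exact C_cover i.isLt j.isLt l.isLt e.isLt h
      · have := C_cover j.isLt i.isLt l.isLt e.isLt h
        tauto
    have : 1 ≤ ct i e + ct j e + ct l e := by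
      unfold ct
      rcases hT with h | h | h <;> rw [if_pos h] <;> omega
    omega
  unfold ww
  by_cases h : sg i j l = 0
  · simp [h]
  · rw [← key h]; ring

theorem ww_mem (hp : 2 ≤ p) {I : Ideal R} (hu : ∀ e, u e ∈ I) (i j l : Fin (2 * p + 1)) :
    ww u i j l ∈ I := by
  unfold ww
  by_cases h : sg i j l = 0
  · simp [h]
  apply Ideal.mul_mem_left
  have hC : C i j l ∨ C j i l := by
    unfold sg at h
    by_contra hc
    push Not at hc
    simp [hc] at h
  have : ∃ e, e < 2 * p + 1 ∧ ((T i e ∧ T j e) ∨ (T j e ∧ T l e) ∨ (T l e ∧ T i e)) := by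
    rcases hC with h | h
    · exact C_twice i.isLt j.isLt l.isLt hp h
    · obtain ⟨e, he, h⟩ := C_twice j.isLt i.isLt l.isLt hp h
      exact ⟨e, he, by tauto⟩
  obtain ⟨e, he, h⟩ := this
  unfold w0
  refine Ideal.mem_of_dvd _ (Finset.dvd_prod_of_mem _ (Finset.mem_univ ⟨e, he⟩)) ?_
  apply Ideal.pow_mem_of_mem _ (hu _)
  unfold ct
  rcases h with h | h | h <;> rw [if_pos h.1, if_pos h.2] <;> omega

theorem hh_mem (hp : 1 ≤ p) {I : Ideal R} (hu : ∀ e, u e ∈ I) (i : Fin (2 * p + 1)) :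
    hh u i ∈ I := by
  unfold hh
  refine Ideal.mem_of_dvd _ (Finset.dvd_prod_of_mem _ (Finset.mem_univ (nx p i))) ?_
  apply Ideal.pow_mem_of_mem _ (hu _)
  have := nx_val i
  have : T i (nx p i) := by unfold T; omega
  simp [ct, this]

theorem nzd_prod (hu : ∀ e a, u e * a = 0 → a = 0) (f : Fin (2 * p + 1) → ℕ) (a : R)
    (h : (∏ e, u e ^ f e) * a = 0) : a = 0 := by
  have : (∏ e, u e ^ f e) ∈ nonZeroDivisors R := by
    refine prod_mem fun e _ => pow_mem ?_ _
    rw [mem_nonZeroDivisors_iff_right]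
    intro x hx
    exact hu e x (by rw [mul_comm]; exact hx)
  rw [mem_nonZeroDivisors_iff_right] at this
  exact this a (by rw [mul_comm]; exact h)

/-- The basic identity. -/
theorem ww_rec (hp : 1 ≤ p) (hu : ∀ e a, u e * a = 0 → a = 0) (i j k : Fin (2 * p + 1)) :
    u k * ww u i j (nx p k) - u ((nx p).symm k) * ww u i j ((nx p).symm k) =
      hh u i * (if j = k then 1 else 0) - hh u j * (if i = k then 1 else 0) := by
  rw [← sub_eq_zero]
  apply nzd_prod u hu (fun e => ct k e + 1)
  simp_rw [pow_succ]
  rw [Finset.prod_mul_distrib]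
  set P : R := ∏ e, u e with hP
  change hh u k * P * _ = 0
  have h1 := ww_mul u i j (nx p k)
  have h2 := ww_mul u i j ((nx p).symm k)
  have h3 := hh_mul u hp k
  have h4 := hh_mul u hp ((nx p).symm k)
  rw [Equiv.apply_symm_apply] at h4
  rw [← hP] at h1 h2 h3 h4
  have h5 := sg_rec i.isLt j.isLt k.isLt (nx_val k) (pv_val k) hp
  have h6 : ((sg i j (nx p k) : ℤ) : R) - sg i j ((nx p).symm k) =
      (if j = k then 1 else 0) - (if i = k then 1 else 0) := by
    have := congrArg (fun t : ℤ => (t : R)) h5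
    simp only [Fin.val_inj] at this
    push_cast at this
    exact this
  have h7 : (if j = k then (1 : R) else 0) * hh u k = (if j = k then 1 else 0) * hh u j := by
    split_ifs with h
    · rw [h]
    · simp
  have h8 : (if i = k then (1 : R) else 0) * hh u k = (if i = k then 1 else 0) * hh u i := by
    split_ifs with h
    · rw [h]
    · simp
  linear_combination hh u k * u k * h1 - hh u k * u ((nx p).symm k) * h2 +
    sg i j (nx p k) * hh u i * hh u j * h3 - sg i j ((nx p).symm k) * hh u i * hh u j * h4 +
    P * hh u i * hh u j * h6 - P * hh u i * h7 + P * hh u j * h8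

def gd1 : (Fin (2 * p + 1) → R) →ₗ[R] R := Fintype.linearCombination R (hh u)

theorem gd1_apply (v : Fin (2 * p + 1) → R) : gd1 u v = ∑ i, v i * hh u i := by
  simp [gd1, Fintype.linearCombination_apply]

def gd2 : (Fin (2 * p + 1) → R) →ₗ[R] (Fin (2 * p + 1) → R) :=
  LinearMap.pi fun k => u k • LinearMap.proj (nx p k) -
    u ((nx p).symm k) • LinearMap.proj ((nx p).symm k)

theorem gd2_apply (v : Fin (2 * p + 1) → R) (k : Fin (2 * p + 1)) :
    gd2 u v k = u k * v (nx p k) - u ((nx p).symm k) * v ((nx p).symm k) := by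
  simp [gd2]

def gm : (Fin (2 * p + 1) → R) →ₗ[R] (Fin (2 * p + 1) → R) →ₗ[R] (Fin (2 * p + 1) → R) :=
  LinearMap.mk₂ R (fun a b l => ∑ i, ∑ j, a i * b j * ww u i j l)
    (by intros; ext l; simp [add_mul, Finset.sum_add_distrib])
    (by intros; ext l; simp [Finset.mul_sum, mul_assoc])
    (by intros; ext l; simp [mul_add, add_mul, Finset.sum_add_distrib])
    (by intros; ext l; simp [Finset.mul_sum, mul_left_comm, mul_assoc])

theorem gm_apply (a b : Fin (2 * p + 1) → R) (l : Fin (2 * p + 1)) :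
    gm u a b l = ∑ i, ∑ j, a i * b j * ww u i j l := rfl

theorem gI1 (hp : 1 ≤ p) (hu : ∀ e a, u e * a = 0 → a = 0) (a b : Fin (2 * p + 1) → R) :
    gd2 u (gm u a b) = gd1 u a • b - gd1 u b • a := by
  ext k
  rw [gd2_apply, gm_apply, gm_apply, Finset.mul_sum, Finset.mul_sum, ← Finset.sum_sub_distrib]
  have : ∀ i, (u k * ∑ j, a i * b j * ww u i j (nx p k)) -
      (u ((nx p).symm k) * ∑ j, a i * b j * ww u i j ((nx p).symm k)) =
      a i * hh u i * b k - (if i = k then a i else 0) * ∑ j, b j * hh u j := by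
    intro i
    rw [Finset.mul_sum, Finset.mul_sum, ← Finset.sum_sub_distrib, Finset.mul_sum]
    have h2 : a i * hh u i * b k = ∑ j, a i * hh u i * (if j = k then b j else 0) := by
      rw [← Finset.mul_sum]; simp
    rw [h2, ← Finset.sum_sub_distrib]
    refine Finset.sum_congr rfl fun j _ => ?_
    have := ww_rec u hp hu i j k
    have h3 : (if j = k then b j else 0) = b j * (if j = k then 1 else 0) := by simp
    have h4 : (if i = k then a i else 0) = a i * (if i = k then 1 else 0) := by simp
    rw [h3, h4]
    linear_combination a i * b j * this
  simp_rw [this]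
  rw [Finset.sum_sub_distrib, ← Finset.sum_mul, ← Finset.sum_mul]
  simp [gd1_apply, mul_comm]

theorem gm_skew (hp : 1 ≤ p) (hu : ∀ e a, u e * a = 0 → a = 0) (a f : Fin (2 * p + 1) → R) :
    (a ⬝ᵥ f) • hh u = gd1 u a • f - gm u a (gd2 u f) := by
  ext q
  simp only [Pi.smul_apply, Pi.sub_apply, smul_eq_mul]
  rw [gd1_apply, gm_apply, dotProduct, Finset.sum_mul, Finset.sum_mul, ← Finset.sum_sub_distrib]
  refine Finset.sum_congr rfl fun i _ => ?_
  have e1 : ∑ j, a i * gd2 u f j * ww u i j q =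
      ∑ l, (a i * f l) * (u ((nx p).symm l) * ww u i ((nx p).symm l) q)
      - ∑ l, (a i * f l) * (u l * ww u i (nx p l) q) := by
    rw [← Equiv.sum_comp (nx p) (fun l => (a i * f l) * (u ((nx p).symm l) *
      ww u i ((nx p).symm l) q)), ← Equiv.sum_comp (nx p).symm (fun l => (a i * f l) *
      (u l * ww u i (nx p l) q)), ← Finset.sum_sub_distrib]
    refine Finset.sum_congr rfl fun j _ => ?_
    rw [gd2_apply, Equiv.symm_apply_apply, Equiv.apply_symm_apply]
    ring
  have e2 : ∀ l, (a i * f l) * (u ((nx p).symm l) * ww u i ((nx p).symm l) q) -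
      (a i * f l) * (u l * ww u i (nx p l) q) =
      a i * hh u i * (if q = l then f l else 0) - a i * hh u q * (if i = l then f l else 0) := by
    intro l
    have := ww_rec u hp hu q i l
    rw [ww_rot, ww_rot u q] at this
    have h3 : (if q = l then f l else 0) = f l * (if q = l then 1 else 0) := by simp
    have h4 : (if i = l then f l else 0) = f l * (if i = l then 1 else 0) := by simp
    rw [h3, h4]
    linear_combination - a i * f l * this
  rw [e1, ← Finset.sum_sub_distrib]
  simp_rw [e2]
  rw [Finset.sum_sub_distrib, ← Finset.mul_sum, ← Finset.mul_sum]
  simp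
  ring

theorem gm_self (a : Fin (2 * p + 1) → R) : gm u a a = 0 := by
  ext l
  rw [gm_apply, ← Finset.sum_product']
  refine Finset.sum_involution (fun x _ => (x.2, x.1)) ?_ ?_ ?_ ?_
  · rintro ⟨i, j⟩ _
    rw [ww_swap]; ring
  · rintro ⟨i, j⟩ _ h h'
    apply h
    simp only [Prod.mk.injEq] at h'
    obtain ⟨rfl, -⟩ := h'
    simp [ww_self]
  · simp
  · simp

theorem gd2_hh (hp : 1 ≤ p) (hu : ∀ e a, u e * a = 0 → a = 0) : gd2 u (hh u) = 0 := by
  ext k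
  rw [gd2_apply]
  apply nzd_prod u hu (fun e => ct k e)
  change hh u k * _ = 0
  have h3 := hh_mul u hp k
  have h4 := hh_mul u hp ((nx p).symm k)
  rw [Equiv.apply_symm_apply] at h4
  linear_combination h3 - h4

theorem gd1_gd2 (hp : 1 ≤ p) (hu : ∀ e a, u e * a = 0 → a = 0) (v : Fin (2 * p + 1) → R) :
    gd1 u (gd2 u v) = 0 := by
  rw [gd1_apply]
  simp_rw [gd2_apply, sub_mul]
  rw [Finset.sum_sub_distrib, ← Equiv.sum_comp (nx p).symm (fun k => u k * v (nx p k) * hh u k),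
    ← Equiv.sum_comp (nx p) (fun k => u ((nx p).symm k) * v ((nx p).symm k) * hh u k),
    ← Finset.sum_sub_distrib]
  refine Finset.sum_eq_zero fun k _ => ?_
  rw [Equiv.symm_apply_apply, Equiv.apply_symm_apply]
  have := congrFun (gd2_hh u hp hu) k
  rw [gd2_apply] at this
  simp only [Pi.zero_apply] at this
  linear_combination - v k * this

end gor

end ClassG

namespace ClassG

/-- The edge weights. -/
def uu {R : Type} [CommRing R] (x y z : R) (E p : ℕ) (t : Fin (2 * p + 1)) : R :=
  if (t : ℕ) = 0 then z ^ E else if (t : ℕ) % 2 = 1 then y ^ E - z ^ (E + t)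
    else x ^ E - z ^ (E + t)

theorem h2_pow {R : Type} [CommRing R] {y z : R} (h : ∀ a b, y * b = z * a → ∃ c, b = z * c)
    (n : ℕ) : ∀ a b, y ^ n * b = z * a → ∃ c, b = z * c := by
  induction n with
  | zero => intro a b h; exact ⟨a, by simpa using h⟩
  | succ n ih =>
    intro a b e
    obtain ⟨c, hc⟩ := ih a (y * b) (by rw [← e]; ring)
    exact h c b hc

theorem uu_nzd {R : Type} [CommRing R] [IsNoetherianRing R] [IsLocalRing R] {x y z : R}
    (hz : z ∈ maximalIdeal R) (h1 : Reg3 z y x) (h2 : Reg3 z x y) {E p : ℕ} (hE : 0 < E)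
    (t : Fin (2 * p + 1)) (a : R) (h : uu x y z E p t * a = 0) : a = 0 := by
  have hd : ∃ s, z ^ (E + (t : ℕ)) = z * s := ⟨z ^ (E + t - 1), by
    rw [← pow_succ']; congr 1; omega⟩
  unfold uu at h
  split_ifs at h
  · have : ∀ n, z ^ n * a = 0 → a = 0 := by
      intro n
      induction n with
      | zero => simp
      | succ n ih =>
        intro e
        exact ih (h1.h1 _ (by rw [← e]; ring))
    exact this _ h
  · exact nzd_sub hz h1.h1 (h2_pow h1.h2 E) hd h
  · exact nzd_sub hz h1.h1 (h2_pow h2.h2 E) hd h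

theorem uu_mem {R : Type} [CommRing R] [IsLocalRing R] {x y z : R}
    (hx : x ∈ maximalIdeal R) (hy : y ∈ maximalIdeal R) (hz : z ∈ maximalIdeal R) (E p : ℕ)
    (t : Fin (2 * p + 1)) : uu x y z E p t ∈ maximalIdeal R ^ E := by
  have hd : z ^ (E + (t : ℕ)) ∈ maximalIdeal R ^ E := by
    rw [pow_add]; exact Ideal.mul_mem_right _ _ (Ideal.pow_mem_pow hz E)
  unfold uu
  split_ifs
  · exact Ideal.pow_mem_pow hz E
  · exact Ideal.sub_mem _ (Ideal.pow_mem_pow hy E) hd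
  · exact Ideal.sub_mem _ (Ideal.pow_mem_pow hx E) hd

theorem sub_pow_prime {R : Type} [CommRing R] [IsLocalRing R] {z : R} (hz : z ∈ maximalIdeal R)
    {P : Ideal R} (hP : P.IsPrime) (hzP : z ∉ P) (w : R) (E a b : ℕ) (hab : a < b)
    (h1 : w - z ^ (E + a) ∈ P) (h2 : w - z ^ (E + b) ∈ P) : False := by
  have h3 := P.sub_mem h2 h1
  have e : w - z ^ (E + b) - (w - z ^ (E + a)) = z ^ (E + a) * (1 - z ^ (b - a)) := by
    have : z ^ (E + b) = z ^ (E + a) * z ^ (b - a) := by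
      rw [← pow_add]; congr 1; omega
    rw [this]; ring
  rw [e] at h3
  rcases hP.mem_or_mem h3 with h | h
  · exact hzP (hP.mem_of_pow_mem _ h)
  · have hu : IsUnit (1 - z ^ (b - a)) := by
      have hm : z ^ (b - a) ∈ maximalIdeal R := Ideal.pow_mem_of_mem _ hz _ (by omega)
      by_contra hc
      have : (1 : R) ∈ maximalIdeal R := by
        have := Ideal.add_mem _ ((mem_maximalIdeal _).mpr hc) hm
        simpa using this
      exact (Ideal.ne_top_iff_one _).mp (maximalIdeal.isMaximal R).ne_top this
    exact hP.ne_top (Ideal.eq_top_of_isUnit_mem _ h hu)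

theorem uu_radical {R : Type} [CommRing R] [IsLocalRing R] {x y z : R}
    (hz : z ∈ maximalIdeal R) {E p : ℕ} (hp : 1 ≤ p) (hE : 0 < E)
    {P : Ideal R} (hP : P.IsPrime) (hI : ∀ i, hh (uu x y z E p) i ∈ P) :
    x ∈ P ∧ y ∈ P ∧ z ∈ P := by
  have hc : ∀ i : Fin (2 * p + 1), ∃ e : Fin (2 * p + 1), T i e ∧ uu x y z E p e ∈ P := by
    intro i
    have := hI i
    unfold hh at this
    rw [hP.prod_mem_iff] at this
    obtain ⟨e, -, he⟩ := this
    by_cases hT : T i e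
    · exact ⟨e, hT, hP.mem_of_pow_mem _ he⟩
    · simp only [ct, hT, if_false, pow_zero] at he
      exact absurd ((Ideal.eq_top_iff_one _).mpr he) hP.ne_top
  obtain ⟨o, ho, hoP⟩ := hc ⟨0, by omega⟩
  obtain ⟨v, hv, hvP⟩ := hc ⟨1, by omega⟩
  simp only [T] at ho hv
  have ho1 : (o : ℕ) % 2 = 1 := by omega
  have hv1 : (v : ℕ) % 2 = 0 ∧ (v : ℕ) ≠ 0 := by omega
  have eo : uu x y z E p o = y ^ E - z ^ (E + o) := by
    unfold uu; rw [if_neg (by omega), if_pos ho1]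
  have ev : uu x y z E p v = x ^ E - z ^ (E + v) := by
    unfold uu; rw [if_neg (by omega), if_neg (by omega)]
  rw [eo] at hoP
  rw [ev] at hvP
  by_cases hzP : z ∈ P
  · refine ⟨hP.mem_of_pow_mem E ?_, hP.mem_of_pow_mem E ?_, hzP⟩
    · have := P.add_mem hvP (P.pow_mem_of_mem hzP (E + v) (by omega))
      simpa using this
    · have := P.add_mem hoP (P.pow_mem_of_mem hzP (E + o) (by omega))
      simpa using this
  exfalso
  have hi : ∃ i : Fin (2 * p + 1), ¬ T i o ∧ ¬ T i v := by
    rcases lt_or_ge (o : ℕ) v with h | h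
    · exact ⟨v, by unfold T; omega⟩
    · exact ⟨o, by unfold T; omega⟩
  obtain ⟨i, hio, hiv⟩ := hi
  obtain ⟨e, he, heP⟩ := hc i
  unfold uu at heP
  split_ifs at heP with h1 h2
  · exact hzP (hP.mem_of_pow_mem _ heP)
  · rcases lt_trichotomy (e : ℕ) o with h | h | h
    · exact sub_pow_prime hz hP hzP _ E _ _ h heP hoP
    · rw [h] at he; exact hio he
    · exact sub_pow_prime hz hP hzP _ E _ _ h hoP heP
  · rcases lt_trichotomy (e : ℕ) v with h | h | h
    · exact sub_pow_prime hz hP hzP _ E _ _ h heP hvP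
    · rw [h] at he; exact hiv he
    · exact sub_pow_prime hz hP hzP _ E _ _ h hvP heP

/-- The Gorenstein ideals. -/
theorem gor_exists {R : Type} [CommRing R] [IsNoetherianRing R] [IsLocalRing R] {x y z : R}
    (hx : x ∈ maximalIdeal R) (hy : y ∈ maximalIdeal R) (hz : z ∈ maximalIdeal R)
    (h : RingTheory.Sequence.IsWeaklyRegular R [x, y, z]) {p E : ℕ} (hp : 2 ≤ p) (hE : 0 < E) :
    ∃ (d1 : (Fin (2 * p + 1) → R) →ₗ[R] R)
      (d2 : (Fin (2 * p + 1) → R) →ₗ[R] (Fin (2 * p + 1) → R)) (G : Fin (2 * p + 1) → R)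
      (m11 : (Fin (2 * p + 1) → R) →ₗ[R] (Fin (2 * p + 1) → R) →ₗ[R] (Fin (2 * p + 1) → R)),
      (∀ v, d1 v = 0 ↔ ∃ w, d2 w = v) ∧ (∀ v, d2 v = 0 ↔ ∃ t : R, t • G = v) ∧
      (∀ t : R, t • G = 0 → t = 0) ∧
      (∀ v, d1 v ∈ maximalIdeal R ^ E) ∧
      (∀ v i, d2 v i ∈ maximalIdeal R ^ E) ∧
      (∀ i, G i ∈ maximalIdeal R ^ E) ∧
      (∀ a b, d2 (m11 a b) = d1 a • b - d1 b • a) ∧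
      (∀ a, m11 a a = 0) ∧
      (∀ a f, (a ⬝ᵥ f) • G = d1 a • f - m11 a (d2 f)) ∧
      (∀ a b i, m11 a b i ∈ maximalIdeal R) := by
  have r1 := weakly_rot hx hy hz h
  have r2 := weakly_rot hy hz hx r1
  have r3 := weakly_swap hy hz hx r1
  have nz := uu_nzd (p := p) hz (reg3_of_weakly r3) (reg3_of_weakly r2) hE
  set u := uu x y z E p with hu
  have hp1 : 1 ≤ p := by omega
  have um : ∀ e, u e ∈ maximalIdeal R ^ E := uu_mem hx hy hz E p
  have um1 : ∀ e, u e ∈ maximalIdeal R := fun e => Ideal.pow_le_self (by omega) (um e)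
  have hG : ∀ t : R, t • hh u = 0 → t = 0 := by
    intro t ht
    have := congrFun ht 0
    simp only [Pi.smul_apply, smul_eq_mul, Pi.zero_apply] at this
    exact nzd_prod u nz _ t (by rw [mul_comm]; exact this)
  have hrad : ∀ w, w ∈ ({x, y, z} : Set R) → w ∈ Ideal.radical (LinearMap.range (gd1 u)) := by
    intro w hw
    rw [Ideal.radical_eq_sInf, Ideal.mem_sInf]
    rintro P ⟨hIP, hP⟩
    have := uu_radical (x := x) (y := y) hz hp1 hE hP (fun i => hIP ⟨Pi.single i 1, by
      rw [gd1_apply]; simp [Pi.single_apply, hu]⟩)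
    rcases hw with rfl | rfl | rfl
    · exact this.1
    · exact this.2.1
    · exact this.2.2
  obtain ⟨a, ha⟩ := hrad x (by simp)
  obtain ⟨b, hb⟩ := hrad y (by simp)
  obtain ⟨c, hc⟩ := hrad z (by simp)
  have big : ∀ w k, w ^ k ∈ LinearMap.range (gd1 u) → k ≤ a + b + c + 1 →
      ∃ v, gd1 u v = w ^ (a + b + c + 1) := by
    intro w k hk hle
    have : w ^ (a + b + c + 1) ∈ LinearMap.range (gd1 u) := by
      rw [← Nat.sub_add_cancel hle, pow_add]
      exact Submodule.smul_mem _ _ hk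
    exact this
  have ex := gor_exact (gd1 u) (gd2 u) (hh u) (gm u) (gI1 u hp1 nz) (gm_skew u hp1 nz) hG
    (gd2_hh u hp1 nz) (reg3_of_weakly (weakly_pow hx hy hz h (n := a + b + c + 1) (by omega)))
    (big x a ha (by omega)) (big y b hb (by omega)) (big z c hc (by omega))
  refine ⟨gd1 u, gd2 u, hh u, gm u, ?_, ?_, hG, ?_, ?_, fun i => hh_mem u hp1 um i,
    gI1 u hp1 nz, gm_self u, gm_skew u hp1 nz, ?_⟩
  · intro v
    refine ⟨ex.1 v, ?_⟩
    rintro ⟨w, rfl⟩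
    exact gd1_gd2 u hp1 nz w
  · intro v
    refine ⟨ex.2 v, ?_⟩
    rintro ⟨t, rfl⟩
    rw [map_smul, gd2_hh u hp1 nz, smul_zero]
  · intro v
    rw [gd1_apply]
    exact Ideal.sum_mem _ fun i _ => Ideal.mul_mem_left _ _ (hh_mem u hp1 um i)
  · intro v i
    rw [gd2_apply]
    exact Ideal.sub_mem _ (Ideal.mul_mem_right _ _ (um _)) (Ideal.mul_mem_right _ _ (um _))
  · intro a b i
    rw [gm_apply]
    exact Ideal.sum_mem _ fun i _ => Ideal.sum_mem _ fun j _ =>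
      Ideal.mul_mem_left _ _ (ww_mem u hp um1 _ _ _)

end ClassG

namespace ClassG

/-- Alternating lifts. -/
theorem alt_lift {R : Type} [CommRing R] {P Q G : Type} [AddCommGroup P] [Module R P]
    [AddCommGroup Q] [Module R Q] [AddCommGroup G] [Module R G] {m : ℕ}
    (b : Module.Basis (Fin m) R P) (θ : P →ₗ[R] P →ₗ[R] Q) (hθ : ∀ v, θ v v = 0)
    (D : G →ₗ[R] Q) (S : Submodule R G) (h : ∀ v w, ∃ u ∈ S, D u = θ v w) :
    ∃ γ : P →ₗ[R] P →ₗ[R] G, (∀ v, γ v v = 0) ∧ (∀ v w, γ v w ∈ S) ∧ ∀ v w, D (γ v w) = θ v w := by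
  choose c hcS hc using h
  let s : Fin m → Fin m → G := fun i j =>
    if i < j then c (b i) (b j) else if j < i then - c (b j) (b i) else 0
  have hs : ∀ i j, s i j = - s j i := by
    intro i j
    rcases lt_trichotomy i j with h | h | h
    · simp [s, h, h.not_gt]
    · simp [s, h]
    · simp [s, h, h.not_gt]
  have hs0 : ∀ i, s i i = 0 := by intro i; simp [s]
  have hsS : ∀ i j, s i j ∈ S := by
    intro i j
    simp only [s]
    split_ifs
    · exact hcS _ _
    · exact S.neg_mem (hcS _ _)
    · exact S.zero_mem
  have hsw : ∀ v w, θ v w = - θ w v := by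
    intro v w
    have := hθ (v + w)
    simp only [map_add, LinearMap.add_apply, hθ, zero_add, add_zero] at this
    exact eq_neg_of_add_eq_zero_right this
  have hsD : ∀ i j, D (s i j) = θ (b i) (b j) := by
    intro i j
    rcases lt_trichotomy i j with h | h | h
    · simp [s, h, hc]
    · simp [s, h, hθ]
    · simp [s, h, h.not_gt, hc]; rw [hsw (b i)]
  let γ : P →ₗ[R] P →ₗ[R] G := LinearMap.mk₂ R
    (fun v w => ∑ i, ∑ j, (b.repr v i * b.repr w j) • s i j)
    (by intros; simp [add_mul, add_smul, Finset.sum_add_distrib])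
    (by intros; simp [Finset.smul_sum, mul_smul])
    (by intros; simp [mul_add, add_smul, Finset.sum_add_distrib])
    (by intros; simp only [map_smul, Finsupp.smul_apply, smul_eq_mul, Finset.smul_sum, smul_smul,
          mul_left_comm])
  have hγ : ∀ v w, γ v w = ∑ i, ∑ j, (b.repr v i * b.repr w j) • s i j := fun v w => rfl
  refine ⟨γ, ?_, ?_, ?_⟩
  · intro v
    rw [hγ, ← Finset.sum_product']
    refine Finset.sum_involution (fun x _ => (x.2, x.1)) ?_ ?_ ?_ ?_
    · rintro ⟨i, j⟩ _
      rw [hs j i, smul_neg, mul_comm]; simp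
    · rintro ⟨i, j⟩ _ h h'
      apply h
      simp only [Prod.mk.injEq] at h'
      obtain ⟨rfl, -⟩ := h'
      simp [hs0]
    · simp
    · simp
  · intro v w
    rw [hγ]
    exact Submodule.sum_mem _ fun i _ => Submodule.sum_mem _ fun j _ => S.smul_mem _ (hsS i j)
  · intro v w
    rw [hγ]
    simp only [map_sum, map_smul, hsD]
    conv_rhs => rw [← b.sum_repr v, ← b.sum_repr w]
    simp only [map_sum, LinearMap.sum_apply, map_smul, LinearMap.smul_apply, Finset.smul_sum,
      mul_smul]
    rw [Finset.sum_comm]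
    refine Finset.sum_congr rfl fun j _ => Finset.sum_congr rfl fun i _ => ?_
    rw [smul_comm]

theorem lin_lift {R : Type} [CommRing R] {ι P G : Type} [Fintype ι] [DecidableEq ι]
    [AddCommGroup P] [Module R P] [AddCommGroup G] [Module R G]
    (θ : (ι → R) →ₗ[R] P) (D : G →ₗ[R] P) (S : Submodule R G) (h : ∀ v, ∃ u ∈ S, D u = θ v) :
    ∃ q : (ι → R) →ₗ[R] G, (∀ v, q v ∈ S) ∧ ∀ v, D (q v) = θ v := by
  choose c hcS hc using h
  refine ⟨Fintype.linearCombination R fun i => c (Pi.single i 1), ?_, ?_⟩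
  · intro v
    rw [Fintype.linearCombination_apply]
    exact S.sum_mem fun i _ => S.smul_mem _ (hcS _)
  · intro v
    rw [Fintype.linearCombination_apply]
    conv_rhs => rw [pi_eq_sum_univ' v]
    simp only [map_sum, map_smul, hc]

theorem trim {R : Type} [CommRing R] [IsLocalRing R] {ι A G0 G1 G2 G3 : Type} [Fintype ι]
    [DecidableEq ι] [AddCommGroup A] [AddCommGroup G0] [AddCommGroup G1] [AddCommGroup G2]
    [AddCommGroup G3] [Module R A] [Module R G0] [Module R G1] [Module R G2] [Module R G3]
    {m : ℕ} (bP : Module.Basis (Fin m) R (A × G1))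
    (D1 : G1 →ₗ[R] G0) (D2 : G2 →ₗ[R] G1) (D3 : G3 →ₗ[R] G2)
    (ex1 : ∀ v, D1 v = 0 ↔ ∃ w, D2 w = v) (ex2 : ∀ v, D2 v = 0 ↔ ∃ w, D3 w = v)
    (ex3 : ∀ v, D3 v = 0 → v = 0)
    (mn1 : ∀ v, D1 v ∈ maximalIdeal R • (⊤ : Submodule R G0))
    (mn2 : ∀ v, D2 v ∈ maximalIdeal R • (⊤ : Submodule R G1))
    (mn3 : ∀ v, D3 v ∈ maximalIdeal R • (⊤ : Submodule R G2))
    {K3 K2 E : ℕ} (hK3 : 0 < K3) (hK2 : 0 < K2) (hE2 : K2 ≤ E) (hE3 : K3 ≤ E)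
    (hL3 : ∀ u, D3 u ∈ maximalIdeal R ^ K3 • (⊤ : Submodule R G2) →
      u ∈ maximalIdeal R • (⊤ : Submodule R G3))
    (hL2 : ∀ v ∈ maximalIdeal R ^ K2 • (⊤ : Submodule R G1), D1 v = 0 →
      ∃ u ∈ maximalIdeal R ^ K3 • (⊤ : Submodule R G2), D2 u = v)
    (hL1 : ∀ v ∈ maximalIdeal R ^ E • (⊤ : Submodule R G0),
      ∃ u ∈ maximalIdeal R ^ K2 • (⊤ : Submodule R G1), D1 u = v)
    (e : (ι → R) ≃ₗ[R] A × G0)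
    (d1 : (ι → R) →ₗ[R] R) (d2 : (ι → R) →ₗ[R] (ι → R)) (G : ι → R)
    (m11 : (ι → R) →ₗ[R] (ι → R) →ₗ[R] (ι → R))
    (fx1 : ∀ v, d1 v = 0 ↔ ∃ w, d2 w = v) (fx2 : ∀ v, d2 v = 0 ↔ ∃ t : R, t • G = v)
    (fx3 : ∀ t : R, t • G = 0 → t = 0)
    (fm1 : ∀ v, d1 v ∈ maximalIdeal R ^ E)
    (fm2 : ∀ v i, d2 v i ∈ maximalIdeal R ^ E)
    (fm3 : ∀ i, G i ∈ maximalIdeal R ^ E)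
    (dg : ∀ a b, d2 (m11 a b) = d1 a • b - d1 b • a)
    (alt : ∀ a, m11 a a = 0)
    (dg2 : ∀ a f, (a ⬝ᵥ f) • G = d1 a • f - m11 a (d2 f))
    (mm : ∀ a b i, m11 a b i ∈ maximalIdeal R) :
    ∃ (c1 : A × G1 →ₗ[R] R) (c2 : (ι → R) × G2 →ₗ[R] A × G1) (c3 : R × G3 →ₗ[R] (ι → R) × G2)
      (μ : A × G1 →ₗ[R] A × G1 →ₗ[R] (ι → R) × G2),
      (∀ v, c1 v = 0 ↔ ∃ w, c2 w = v) ∧ (∀ v, c2 v = 0 ↔ ∃ t, c3 t = v) ∧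
      (∀ t, c3 t = 0 → t = 0) ∧
      (∀ v, c1 v ∈ maximalIdeal R) ∧
      (∀ v, c2 v ∈ maximalIdeal R • (⊤ : Submodule R (A × G1))) ∧
      (∀ v, c3 v ∈ maximalIdeal R • (⊤ : Submodule R ((ι → R) × G2))) ∧
      (∀ a b, c2 (μ a b) = c1 a • b - c1 b • a) ∧
      (∀ a, μ a a = 0) ∧
      (∀ a b, μ a b ∈ maximalIdeal R • (⊤ : Submodule R ((ι → R) × G2))) ∧
      (∀ v w s, c3 s = c1 v • w - μ v (c2 w) →
        s.1 - (e.symm (v.1, 0) ⬝ᵥ w.1) ∈ maximalIdeal R ∧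
        s.2 ∈ maximalIdeal R • (⊤ : Submodule R G3)) := by
  have hE0 : E ≠ 0 := by omega
  have pw : ∀ {k : ℕ}, 0 < k → maximalIdeal R ^ k ≤ maximalIdeal R :=
    fun h => Ideal.pow_le_self (by omega)
  have mono : ∀ {M : Type} [AddCommGroup M] [Module R M] {I J : Ideal R}, I ≤ J →
      I • (⊤ : Submodule R M) ≤ J • (⊤ : Submodule R M) := fun h => Submodule.smul_mono h le_rfl
  -- the maps
  let pA : (ι → R) →ₗ[R] A := LinearMap.fst R A G0 ∘ₗ e.toLinearMap
  let pB : (ι → R) →ₗ[R] G0 := LinearMap.snd R A G0 ∘ₗ e.toLinearMap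
  let Φ : A × G1 →ₗ[R] (ι → R) :=
    e.symm.toLinearMap ∘ₗ LinearMap.prodMap LinearMap.id (-D1)
  have pAΦ : ∀ v, pA (Φ v) = v.1 := by intro v; simp [pA, Φ]
  have pBΦ : ∀ v, pB (Φ v) = - D1 v.2 := by intro v; simp [pB, Φ]
  have inj : ∀ f g, pA f = pA g → pB f = pB g → f = g := by
    intro f g h1 h2
    exact e.injective (Prod.ext h1 h2)
  obtain ⟨q1, q1S, hq1⟩ := lin_lift (pB ∘ₗ d2) D1 (maximalIdeal R ^ K2 • ⊤) (by
    intro v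
    exact hL1 _ (map_mem_smul_top pB (mem_smul_top_pi.mpr (fm2 v))))
  simp only [LinearMap.comp_apply] at hq1
  have hd2G : d2 G = 0 := (fx2 G).mpr ⟨1, one_smul _ _⟩
  obtain ⟨q2, q2S, hq2⟩ := hL2 (q1 G) (q1S G) (by rw [hq1, hd2G, map_zero])
  let c1 : A × G1 →ₗ[R] R := d1 ∘ₗ Φ
  have hc1 : ∀ v, c1 v = d1 (Φ v) := fun v => rfl
  let c2 : (ι → R) × G2 →ₗ[R] A × G1 :=
    LinearMap.prod (pA ∘ₗ d2 ∘ₗ LinearMap.fst R _ _)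
      (- (q1 ∘ₗ LinearMap.fst R _ _) + D2 ∘ₗ LinearMap.snd R _ _)
  have hc2 : ∀ f γ, c2 (f, γ) = (pA (d2 f), - q1 f + D2 γ) := fun f γ => rfl
  let c3 : R × G3 →ₗ[R] (ι → R) × G2 :=
    LinearMap.prod (LinearMap.toSpanSingleton R _ G ∘ₗ LinearMap.fst R _ _)
      (LinearMap.toSpanSingleton R _ q2 ∘ₗ LinearMap.fst R _ _ + D3 ∘ₗ LinearMap.snd R _ _)
  have hc3 : ∀ t u, c3 (t, u) = (t • G, t • q2 + D3 u) := fun t u => by simp [c3]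
  have D12 : ∀ w, D1 (D2 w) = 0 := fun w => (ex1 _).mpr ⟨w, rfl⟩
  have D23 : ∀ w, D2 (D3 w) = 0 := fun w => (ex2 _).mpr ⟨w, rfl⟩
  have d12 : ∀ w, d1 (d2 w) = 0 := fun w => (fx1 _).mpr ⟨w, rfl⟩
  have Φc2 : ∀ f γ, Φ (c2 (f, γ)) = d2 f := by
    intro f γ
    apply inj
    · rw [pAΦ, hc2]
    · rw [pBΦ, hc2]; simp [D12, hq1]
  -- the product
  let θ : A × G1 →ₗ[R] A × G1 →ₗ[R] G1 :=
    LinearMap.mk₂ R (fun v w => q1 (m11 (Φ v) (Φ w)) + (c1 v • w.2 - c1 w • v.2))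
      (by intros; simp only [map_add, LinearMap.add_apply, Prod.snd_add]; module)
      (by intros; simp only [map_smul, LinearMap.smul_apply, Prod.smul_snd, smul_eq_mul]; module)
      (by intros; simp only [map_add, Prod.snd_add]; module)
      (by intros; simp only [map_smul, Prod.smul_snd, smul_eq_mul]; module)
  have hθ : ∀ v w, θ v w = q1 (m11 (Φ v) (Φ w)) + (c1 v • w.2 - c1 w • v.2) := fun v w => rfl
  obtain ⟨γ, γalt, γS, hγ⟩ := alt_lift bP θ (by intro v; rw [hθ, alt]; simp) D2
    (maximalIdeal R ^ K3 • ⊤) (by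
      intro v w
      refine hL2 _ ?_ ?_
      · rw [hθ]
        have hm : ∀ v, c1 v ∈ maximalIdeal R ^ K2 := fun v => Ideal.pow_le_pow_right hE2 (fm1 _)
        exact Submodule.add_mem _ (q1S _) (Submodule.sub_mem _
          (Submodule.smul_mem_smul (hm v) trivial) (Submodule.smul_mem_smul (hm w) trivial))
      · rw [hθ, map_add, hq1, dg, map_sub, map_sub, map_smul, map_smul, pBΦ, pBΦ, map_smul,
          map_smul, hc1, hc1]
        module)
  let μ : A × G1 →ₗ[R] A × G1 →ₗ[R] (ι → R) × G2 :=
    LinearMap.mk₂ R (fun v w => (m11 (Φ v) (Φ w), γ v w))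
      (by intros; simp) (by intros; simp) (by intros; simp) (by intros; simp)
  have hμ : ∀ v w, μ v w = (m11 (Φ v) (Φ w), γ v w) := fun v w => rfl
  refine ⟨c1, c2, c3, μ, ?_, ?_, ?_, ?_, ?_, ?_, ?_, ?_, ?_, ?_⟩
  · rintro ⟨a, g⟩
    constructor
    · intro h
      obtain ⟨f, hf⟩ := (fx1 _).mp h
      have h1 : D1 (g + q1 f) = 0 := by
        rw [map_add, hq1, hf, pBΦ]; simp
      obtain ⟨w, hw⟩ := (ex1 _).mp h1
      refine ⟨(f, w), ?_⟩
      rw [hc2, hw, hf, pAΦ]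
      simp
    · rintro ⟨⟨f, w⟩, h⟩
      rw [hc1, ← h, Φc2, d12]
  · rintro ⟨f, w⟩
    constructor
    · intro h
      have h0 : d2 f = 0 := by rw [← Φc2 f w, h, map_zero]
      obtain ⟨t, rfl⟩ := (fx2 _).mp h0
      rw [hc2, Prod.mk_eq_zero] at h
      have h1 : D2 (w - t • q2) = 0 := by
        have := h.2
        rw [map_smul] at this
        rw [map_sub, map_smul, hq2, ← this]
        abel
      obtain ⟨u, hu⟩ := (ex2 _).mp h1
      exact ⟨(t, u), by rw [hc3, hu]; simp⟩
    · rintro ⟨⟨t, u⟩, h⟩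
      rw [← h, hc3, hc2]
      simp [hd2G, hq2, D23]
  · rintro ⟨t, u⟩ h
    rw [hc3, Prod.mk_eq_zero] at h
    have ht := fx3 t h.1
    subst ht
    have := h.2
    rw [zero_smul, zero_add] at this
    rw [ex3 u this]; rfl
  · intro v; exact pw (by omega) (fm1 _)
  · rintro ⟨f, w⟩
    rw [hc2]
    refine mem_smul_top_prod.mpr ⟨?_, ?_⟩
    · exact map_mem_smul_top pA (mono (pw (by omega)) (mem_smul_top_pi.mpr (fm2 f)))
    · exact Submodule.add_mem _ (Submodule.neg_mem _ (mono (pw hK2) (q1S f))) (mn2 w)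
  · rintro ⟨t, u⟩
    rw [hc3]
    refine mem_smul_top_prod.mpr ⟨?_, ?_⟩
    · exact mem_smul_top_pi.mpr fun i => Ideal.mul_mem_left _ _ (pw (by omega) (fm3 i))
    · exact Submodule.add_mem _ (Submodule.smul_mem _ _ (mono (pw hK3) q2S)) (mn3 u)
  · intro v w
    rw [hμ, hc2, hγ, hθ, dg]
    ext
    · simp only [map_sub, map_smul, pAΦ]; rfl
    · simp
  · intro v
    rw [hμ, alt, γalt]; rfl
  · intro v w
    rw [hμ]
    exact mem_smul_top_prod.mpr ⟨mem_smul_top_pi.mpr (mm _ _), mono (pw hK3) (γS _ _)⟩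
  · rintro v ⟨f, w⟩ ⟨t, u⟩ h
    rw [hc3, hμ, Φc2] at h
    have h1 := congrArg Prod.fst h
    have h2 := congrArg Prod.snd h
    simp only [Prod.smul_mk, Prod.mk_sub_mk] at h1 h2
    have ht : t = Φ v ⬝ᵥ f := by
      have := dg2 (Φ v) f
      rw [hc1, ← this] at h1
      have h3 : (t - Φ v ⬝ᵥ f) • G = 0 := by rw [sub_smul, h1, sub_self]
      exact sub_eq_zero.mp (fx3 _ h3)
    constructor
    · have hΦ : Φ v = e.symm (v.1, 0) + e.symm (0, - D1 v.2) := by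
        rw [← map_add]; simp [Φ]
      have h4 : e.symm (0, - D1 v.2) ∈ maximalIdeal R • (⊤ : Submodule R (ι → R)) :=
        map_mem_smul_top (e.symm.toLinearMap ∘ₗ LinearMap.inr R A G0)
          (Submodule.neg_mem _ (mn1 v.2))
      rw [mem_smul_top_pi] at h4
      simp only [ht, hΦ, add_dotProduct, add_sub_cancel_left]
      exact Ideal.sum_mem _ fun i _ => Ideal.mul_mem_right _ _ (h4 i)
    · apply hL3
      have h5 : D3 u = c1 v • w - γ v (c2 (f, w)) - t • q2 := by
        rw [← h2]; abel
      rw [h5]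
      have hm : c1 v ∈ maximalIdeal R ^ K3 := Ideal.pow_le_pow_right hE3 (fm1 _)
      exact Submodule.sub_mem _ (Submodule.sub_mem _ (Submodule.smul_mem_smul hm trivial) (γS _ _))
        (Submodule.smul_mem _ _ q2S)

end ClassG

namespace ClassG

theorem transfer {R : Type} [CommRing R] [IsLocalRing R] {P1 P2 P3 : Type} [AddCommGroup P1]
    [AddCommGroup P2] [AddCommGroup P3] [Module R P1] [Module R P2] [Module R P3] {m n2 n r : ℕ}
    (b1 : Module.Basis (Fin m) R P1) (b2 : Module.Basis (Fin n2) R P2)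
    (b3 : Module.Basis (Fin n) R P3) (h3 : 0 < n) (hrm : r ≤ m) (hrn : r ≤ n2)
    (c1 : P1 →ₗ[R] R) (c2 : P2 →ₗ[R] P1) (c3 : P3 →ₗ[R] P2) (μ : P1 →ₗ[R] P1 →ₗ[R] P2)
    (ex1 : ∀ v, c1 v = 0 ↔ ∃ w, c2 w = v) (ex2 : ∀ v, c2 v = 0 ↔ ∃ t, c3 t = v)
    (ex3 : ∀ t, c3 t = 0 → t = 0)
    (mn1 : ∀ v, c1 v ∈ maximalIdeal R)
    (mn2 : ∀ v, c2 v ∈ maximalIdeal R • (⊤ : Submodule R P1))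
    (mn3 : ∀ v, c3 v ∈ maximalIdeal R • (⊤ : Submodule R P2))
    (dg : ∀ a b, c2 (μ a b) = c1 a • b - c1 b • a)
    (alt : ∀ a, μ a a = 0)
    (mm : ∀ a b, μ a b ∈ maximalIdeal R • (⊤ : Submodule R P2))
    (nf : ∀ (i : Fin m) (j : Fin n2) s, c3 s = c1 (b1 i) • b2 j - μ (b1 i) (c2 (b2 j)) →
      s - (if (i : ℕ) = (j : ℕ) ∧ (i : ℕ) < r then b3 ⟨0, h3⟩ else 0) ∈
        maximalIdeal R • (⊤ : Submodule R P3)) :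
    ∃ J : Ideal R, HasTorClassGWithRanks R J m n r := by
  have inj : ∀ s t, c3 s = c3 t → s = t := by
    intro s t h
    exact sub_eq_zero.mp (ex3 _ (by rw [map_sub, h, sub_self]))
  have skew : ∀ v w, μ v w = - μ w v := by
    intro v w
    have := alt (v + w)
    simp only [map_add, LinearMap.add_apply, alt, zero_add, add_zero] at this
    exact eq_neg_of_add_eq_zero_right this
  have c12 : ∀ w, c1 (c2 w) = 0 := fun w => (ex1 _).mpr ⟨w, rfl⟩
  have hex : ∀ a z, ∃ s, c3 s = c1 a • z - μ a (c2 z) := by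
    intro a z
    apply (ex2 _).mp
    rw [map_sub, map_smul, dg, c12]
    simp
  choose k hk using hex
  let ν : P1 →ₗ[R] P2 →ₗ[R] P3 := LinearMap.mk₂ R k
    (by intros; apply inj; simp only [map_add, hk, LinearMap.add_apply]; module)
    (by intros; apply inj; simp only [map_smul, hk, LinearMap.smul_apply, smul_eq_mul]; module)
    (by intros; apply inj; simp only [map_add, hk]; module)
    (by intros; apply inj; simp only [map_smul, hk]; module)
  have hν : ∀ a z, c3 (ν a z) = c1 a • z - μ a (c2 z) := hk
  have assoc : ∀ a b c, ν c (μ a b) = ν a (μ b c) := by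
    intro a b c
    apply inj
    rw [hν, hν, dg, dg, map_sub, map_sub, map_smul, map_smul, map_smul, map_smul,
      skew c b, skew c a]
    module
  let φ1 := b1.equivFun
  let φ2 := b2.equivFun
  let φ3 := b3.equivFun
  refine ⟨LinearMap.range (c1 ∘ₗ φ1.symm.toLinearMap), n2, h3, hrm, hrn,
    c1 ∘ₗ φ1.symm.toLinearMap, φ1.toLinearMap ∘ₗ c2 ∘ₗ φ2.symm.toLinearMap,
    φ2.toLinearMap ∘ₗ c3 ∘ₗ φ3.symm.toLinearMap,
    (μ.compl₁₂ φ1.symm.toLinearMap φ1.symm.toLinearMap).compr₂ φ2.toLinearMap,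
    (ν.compl₁₂ φ1.symm.toLinearMap φ2.symm.toLinearMap).compr₂ φ3.toLinearMap,
    rfl, ?_, ?_, ?_, ?_, ?_, ?_, ?_, ?_, ?_, ?_, ?_, ?_, ?_⟩
  · ext v
    simp only [LinearMap.mem_ker, LinearMap.mem_range, LinearMap.comp_apply,
      LinearEquiv.coe_coe, ex1]
    constructor
    · rintro ⟨w, hw⟩
      exact ⟨φ2 w, by simp [hw]⟩
    · rintro ⟨w, rfl⟩
      exact ⟨φ2.symm w, by simp⟩
  · ext v
    simp only [LinearMap.mem_ker, LinearMap.mem_range, LinearMap.comp_apply,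
      LinearEquiv.coe_coe, LinearEquiv.map_eq_zero_iff, ex2]
    constructor
    · rintro ⟨w, hw⟩
      exact ⟨φ3 w, by simp [hw]⟩
    · rintro ⟨w, rfl⟩
      exact ⟨φ3.symm w, by simp⟩
  · rw [LinearMap.ker_eq_bot']
    intro v hv
    simp only [LinearMap.comp_apply, LinearEquiv.coe_coe, LinearEquiv.map_eq_zero_iff] at hv
    have := ex3 _ hv
    simpa using this
  · intro v; exact mn1 _
  · intro v; exact map_mem_smul_top φ1.toLinearMap (mn2 _)
  · intro v; exact map_mem_smul_top φ2.toLinearMap (mn3 _)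
  · intro a b
    simp [dg]
  · intro a
    simp [alt]
  · intro a b
    simp only [LinearMap.compr₂_apply, LinearMap.compl₁₂_apply]
    rw [skew, map_neg]
  · intro a z
    simp [hν]
  · intro a b c
    simp [assoc]
  · intro a b
    exact map_mem_smul_top φ2.toLinearMap (mm _ _)
  · intro i j
    have h := nf i j _ (hν (b1 i) (b2 j))
    have h' := map_mem_smul_top φ3.toLinearMap h
    have e1 : φ1.symm (Pi.single i 1) = b1 i := by simp [φ1]
    have e2 : φ2.symm (Pi.single j 1) = b2 j := by simp [φ2]
    have e3 : φ3 (b3 ⟨0, h3⟩) = Pi.single ⟨0, h3⟩ 1 := by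
      rw [← LinearEquiv.eq_symm_apply]; simp [φ3]
    simp only [LinearMap.compr₂_apply, LinearMap.compl₁₂_apply, LinearEquiv.coe_coe, e1, e2]
    rw [LinearEquiv.coe_coe, map_sub] at h'
    convert h' using 2
    split_ifs
    · exact e3.symm
    · simp

end ClassG

namespace ClassG

theorem res_consts {R : Type} [CommRing R] [IsNoetherianRing R] [IsLocalRing R]
    {x : Fin 3 → R} (hx : Ideal.span {x 0, x 1, x 2} = maximalIdeal R)
    {G0 G1 G2 G3 : Type} [AddCommGroup G0] [AddCommGroup G1] [AddCommGroup G2]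
    [AddCommGroup G3] [Module R G0] [Module R G1] [Module R G2] [Module R G3]
    [Module.Finite R G0] [Module.Finite R G1] [Module.Finite R G2]
    (D1 : G1 →ₗ[R] G0) (D2 : G2 →ₗ[R] G1) (D3 : G3 →ₗ[R] G2)
    (ex1 : ∀ v, D1 v = 0 ↔ ∃ w, D2 w = v)
    (ex3 : ∀ v, D3 v = 0 → v = 0)
    (sq : ∀ i v, ∃ w, D1 w = x i ^ 2 • v) :
    ∃ K3 K2 E : ℕ, 0 < K3 ∧ 0 < K2 ∧ K2 ≤ E ∧ K3 ≤ E ∧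
    (∀ u, D3 u ∈ maximalIdeal R ^ K3 • (⊤ : Submodule R G2) →
      u ∈ maximalIdeal R • (⊤ : Submodule R G3)) ∧
    (∀ v ∈ maximalIdeal R ^ K2 • (⊤ : Submodule R G1), D1 v = 0 →
      ∃ u ∈ maximalIdeal R ^ K3 • (⊤ : Submodule R G2), D2 u = v) ∧
    (∀ v ∈ maximalIdeal R ^ E • (⊤ : Submodule R G0),
      ∃ u ∈ maximalIdeal R ^ K2 • (⊤ : Submodule R G1), D1 u = v) := by
  have mono : ∀ {M : Type} [AddCommGroup M] [Module R M] {i j : ℕ}, i ≤ j →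
      maximalIdeal R ^ j • (⊤ : Submodule R M) ≤ maximalIdeal R ^ i • (⊤ : Submodule R M) :=
    fun h => Submodule.smul_mono (Ideal.pow_le_pow_right h) le_rfl
  obtain ⟨K3, h3⟩ := artin_rees_lift D3 1
  obtain ⟨K2, h2⟩ := artin_rees_lift D2 (K3 + 1)
  obtain ⟨K1, h1⟩ := artin_rees_lift D1 (K2 + 1)
  let I : Ideal R := (LinearMap.range D1).colon (⊤ : Submodule R G0)
  have hI : ∀ a, a ∈ I ↔ ∀ v, a • v ∈ LinearMap.range D1 := by
    intro a; simp [I, Submodule.mem_colon]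
  have hrad : maximalIdeal R ≤ I.radical := by
    rw [← hx, Ideal.span_le]
    have : ∀ i, x i ∈ I.radical := fun i => ⟨2, (hI _).mpr fun v => sq i v⟩
    rintro y (rfl | rfl | rfl)
    · exact this 0
    · exact this 1
    · exact this 2
  obtain ⟨K0, h0⟩ := Ideal.exists_pow_le_of_le_radical_of_fg hrad (IsNoetherian.noetherian _)
  refine ⟨K3 + 1, K2 + 1, K0 + K1 + K2 + K3 + 1, by omega, by omega, by omega, by omega,
    ?_, ?_, ?_⟩
  · intro u hu
    obtain ⟨u', hu', e⟩ := h3 _ (mono (by omega) hu) ⟨u, rfl⟩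
    have : u = u' := (sub_eq_zero.mp (ex3 _ (by rw [map_sub, e, sub_self]))).symm
    rw [this]
    simpa using hu'
  · intro v hv h
    exact h2 v (mono (by omega) hv) ((ex1 v).mp h)
  · intro v hv
    refine h1 v (mono (by omega) hv) ?_
    have hv' := mono (i := K0) (by omega) hv
    refine Submodule.smul_le.mpr ?_ hv'
    intro a ha w _
    exact (hI a).mp (h0 ha) w

theorem assemble {R : Type} [CommRing R] [IsNoetherianRing R] [IsLocalRing R] (x : Fin 3 → R)
    (hreg : RingTheory.Sequence.IsWeaklyRegular R [x 0, x 1, x 2])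
    (hx : Ideal.span {x 0, x 1, x 2} = maximalIdeal R) (hm : ∀ i, x i ∈ maximalIdeal R)
    {b g1 g3 r p : ℕ} (hres : Res x b g1 g3) (hp : 2 ≤ p) (hrb : r + b = 2 * p + 1) :
    ∃ J : Ideal R, HasTorClassGWithRanks R J (r + g1) (1 + g3) r := by
  obtain ⟨g2, G0, G1, G2, G3, _, _, _, _, _, _, _, _, b0, b1, b2, b3, D1, D2, D3,
    ex1, ex2, ex3, mn1, mn2, mn3, sq⟩ := hres
  have f0 : Module.Finite R G0 := Module.Finite.of_basis b0
  have f1 : Module.Finite R G1 := Module.Finite.of_basis b1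
  have f2 : Module.Finite R G2 := Module.Finite.of_basis b2
  obtain ⟨K3, K2, E, hK3, hK2, hE2, hE3, hL3, hL2, hL1⟩ :=
    res_consts hx D1 D2 D3 ex1 ex3 sq
  obtain ⟨d1, d2, G, m11, fx1, fx2, fx3, fm1, fm2, fm3, dg, alt, dg2, mm⟩ :=
    gor_exists (hm 0) (hm 1) (hm 2) hreg (p := p) (E := E) hp (by omega)
  let bP := ((Pi.basisFun R (Fin r)).prod b1).reindex finSumFinEquiv
  let bF := ((Pi.basisFun R (Fin r)).prod b0).reindex (finSumFinEquiv.trans (finCongr hrb))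
  let e := bF.equivFun.symm
  obtain ⟨c1, c2, c3, μ, ux1, ux2, ux3, um1, um2, um3, udg, ualt, umm, unf⟩ :=
    trim bP D1 D2 D3 ex1 ex2 ex3 mn1 mn2 mn3 hK3 hK2 hE2 hE3 hL3 hL2 hL1 e d1 d2 G m11
      fx1 fx2 fx3 fm1 fm2 fm3 dg alt dg2 mm
  let bQ := ((Pi.basisFun R (Fin (2 * p + 1))).prod b2).reindex finSumFinEquiv
  let bT := ((Module.Basis.singleton (Fin 1) R).prod b3).reindex finSumFinEquiv
  refine transfer bP bQ bT (by omega) (by omega) (by omega) c1 c2 c3 μ ux1 ux2 ux3 um1 um2 um3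
    udg ualt umm ?_
  intro i j s hs
  obtain ⟨hs1, hs2⟩ := unf _ _ _ hs
  have h0 : bT ⟨0, by omega⟩ = ((1 : R), (0 : G3)) := by
    have : (⟨0, by omega⟩ : Fin (1 + g3)) = finSumFinEquiv (Sum.inl 0) := by
      ext; simp
    rw [this]
    simp [bT]
  have key : e.symm ((bP i).1, 0) ⬝ᵥ (bQ j).1 =
      if (i : ℕ) = (j : ℕ) ∧ (i : ℕ) < r then (1 : R) else 0 := by
    obtain ⟨i', rfl⟩ := finSumFinEquiv.surjective i
    obtain ⟨j', rfl⟩ := finSumFinEquiv.surjective j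
    rcases i' with i' | i'
    · have e1 : e.symm ((bP (finSumFinEquiv (Sum.inl i'))).1, 0) =
          Pi.single (finCongr hrb (Fin.castAdd b i')) 1 := by
        have : bF (finCongr hrb (Fin.castAdd b i')) =
            ((bP (finSumFinEquiv (Sum.inl i'))).1, 0) := by
          rw [← finSumFinEquiv_apply_left, ← Equiv.trans_apply, Module.Basis.reindex_apply,
            Equiv.symm_apply_apply]
          simp [bP]
        rw [← this, LinearEquiv.symm_symm]
        ext k
        rw [Module.Basis.equivFun_self]
        simp [Pi.single_apply, eq_comm]
      rw [e1]
      rcases j' with j' | j'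
      · simp [bQ, Pi.single_apply, Fin.ext_iff]
        simp only [eq_comm]
      · have := i'.isLt
        rw [if_neg (by simp; omega)]
        simp [bQ]
    · rw [if_neg (by simp)]
      have : (bP (finSumFinEquiv (Sum.inr i'))).1 = 0 := by simp [bP]
      rw [this]
      have : e.symm ((0 : Fin r → R), (0 : G0)) = 0 := map_zero e.symm
      rw [this, zero_dotProduct]
  rw [key] at hs1
  refine mem_smul_top_prod.mpr ⟨?_, ?_⟩
  · rw [h0, mem_smul_top_ring]
    convert hs1 using 1
    split_ifs <;> simp
  · rw [h0]
    convert hs2 using 1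
    split_ifs <;> simp

end ClassG

/-!
STATEMENT 15 (part of Corollary 5.8, case (2)): let `(R,𝔪,k)` be a regular local ring
of dimension 3 and `(m,n,r)` positive integers with `r = m - 3(n-1) + 2 ≥ 2`, `n ≥ 3`
and `m ≥ 2n+1 ≥ 7`.  Then there is an ideal `J ⊆ R` with `pd_R(R/J) = 3` such that
`R/J` has Tor-algebra class `G(r)` and realizes the tuple `(m,n,r)`.
-/
theorem realizability_classG_case2
    {R : Type} [CommRing R] [IsNoetherianRing R] [IsLocalRing R]
    -- regular local of dimension 3
    (x : Fin 3 → R)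
    (hreg : RingTheory.Sequence.IsRegular R [x 0, x 1, x 2])
    (hx : Ideal.span {x 0, x 1, x 2} = maximalIdeal R)
    (m n r : ℕ)
    (harith : r + 3 * (n - 1) = m + 2) (hr : 2 ≤ r) (hn : 3 ≤ n)
    (hm : 2 * n + 1 ≤ m) (hm7 : 7 ≤ 2 * n + 1) :
    ∃ J : Ideal R, HasTorClassGWithRanks R J m n r := by
  have hw := hreg.toIsWeaklyRegular
  have hmem : ∀ i, x i ∈ maximalIdeal R := by
    intro i
    rw [← hx]
    apply Ideal.subset_span
    fin_cases i <;> simp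
  have r120 := ClassG.weakly_rot (hmem 0) (hmem 1) (hmem 2) hw
  have r201 := ClassG.weakly_rot (hmem 1) (hmem 2) (hmem 0) r120
  have r210 := ClassG.weakly_swap (hmem 1) (hmem 2) (hmem 0) r120
  have r021 := ClassG.weakly_swap (hmem 2) (hmem 0) (hmem 1) r201
  obtain ⟨s, rfl⟩ : ∃ s, n = 1 + (s + 2) := ⟨n - 3, by omega⟩
  obtain rfl : m = r + (3 * s + 4) := by omega
  obtain ⟨A, B⟩ := ClassG.res_exists x hmem (ClassG.reg3_of_weakly hw)
    (ClassG.reg3_of_weakly r210) (ClassG.reg3_of_weakly r201) (ClassG.reg3_of_weakly r021) s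
  rcases Nat.even_or_odd (r + (s + 2)) with ⟨k, hk⟩ | ⟨k, hk⟩
  · exact ClassG.assemble x hw hx hmem A (p := k - 1) (by omega) (by omega)
  · exact ClassG.assemble x hw hx hmem B (p := k) (by omega) (by omega)
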